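/- arXiv:2207.02713 — 4 statements merged into one kernel-verified Lean document; each statement's English description precedes it below -/
import Mathlib

section
/- For every ν > 1 and every x > 0, K_{ν+1}(x)/K_ν(x) < (ν + √(ν² + (ν/(ν − 1))·x²))/x. -/
/-- The modified Bessel function of the second kind,
`K_ν(x) = ∫_0^∞ e^{-x cosh t} cosh(ν t) dt`. -/
noncomputable def besselK (ν x : ℝ) : ℝ :=
  ∫ t in Set.Ioi (0 : ℝ), Real.exp (-x * Real.cosh t) * Real.cosh (ν * t)

open MeasureTheory Set

/-- weight -/
noncomputable def bphi (a t : ℝ) : ℝ := Real.exp (-(a * t) - a / t)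

/-- the integral `2 K_p(2a)` -/
noncomputable def bI (a p : ℝ) : ℝ := ∫ t in Ioi (0 : ℝ), t ^ (p - 1) * bphi a t

lemma bphi_pos (a t : ℝ) : 0 < bphi a t := Real.exp_pos _

lemma bphi_le {a t : ℝ} (ha : 0 < a) (ht : 0 < t) : bphi a t ≤ Real.exp (-(a * t)) := by
  unfold bphi
  apply Real.exp_le_exp.2
  have : 0 < a / t := by positivity
  linarith

lemma bphi_le' {a t : ℝ} (ha : 0 < a) (ht : 0 < t) :
    bphi a t ≤ a⁻¹ * (t * Real.exp (-(a * t))) := by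
  unfold bphi
  rw [sub_eq_add_neg, Real.exp_add]
  have h1 : Real.exp (-(a / t)) ≤ t / a := by
    rw [Real.exp_neg]
    have h0 : 0 < a / t := by positivity
    have h2 : a / t ≤ Real.exp (a / t) := by linarith [Real.add_one_le_exp (a / t)]
    calc (Real.exp (a / t))⁻¹ ≤ (a / t)⁻¹ := inv_anti₀ h0 h2
      _ = t / a := by rw [inv_div]
  calc Real.exp (-(a * t)) * Real.exp (-(a / t)) ≤ Real.exp (-(a * t)) * (t / a) := by gcongr
    _ = _ := by field_simp

lemma gam_int {s b : ℝ} (hs : -1 < s) (hb : 0 < b) :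
    IntegrableOn (fun t : ℝ => t ^ s * Real.exp (-(b * t))) (Ioi 0) := by
  have := integrableOn_rpow_mul_exp_neg_mul_rpow (p := 1) hs one_pos hb
  simpa using this

lemma bphi_meas (a s : ℝ) : Measurable (fun t : ℝ => t ^ s * bphi a t) := by
  unfold bphi
  fun_prop

lemma bphi_int {a s : ℝ} (ha : 0 < a) (hs : -2 < s) :
    IntegrableOn (fun t : ℝ => t ^ s * bphi a t) (Ioi 0) := by
  have h := (gam_int (s := s + 1) (by linarith) ha).const_mul a⁻¹
  refine Integrable.mono' h (bphi_meas a s).aestronglyMeasurable ?_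
  filter_upwards [ae_restrict_mem measurableSet_Ioi] with t ht
  have ht : 0 < t := ht
  have h1 := bphi_pos a t
  have h2 : 0 < t ^ s := Real.rpow_pos_of_pos ht s
  rw [Real.norm_of_nonneg (by positivity), Real.rpow_add_one ht.ne']
  calc t ^ s * bphi a t ≤ t ^ s * (a⁻¹ * (t * Real.exp (-(a * t)))) := by
        gcongr; exact bphi_le' ha ht
    _ = _ := by ring

lemma bI_pos {a p : ℝ} (ha : 0 < a) (hp : -1 < p) : 0 < bI a p := by
  unfold bI
  rw [setIntegral_pos_iff_support_of_nonneg_ae]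
  · have : Function.support (fun t : ℝ => t ^ (p - 1) * bphi a t) ∩ Ioi 0 = Ioi 0 := by
      apply inter_eq_right.2
      intro t ht
      exact (mul_pos (Real.rpow_pos_of_pos ht _) (bphi_pos a t)).ne'
    rw [this]; simp
  · filter_upwards [ae_restrict_mem measurableSet_Ioi] with t ht
    exact (mul_pos (Real.rpow_pos_of_pos ht _) (bphi_pos a t)).le
  · exact bphi_int ha (by linarith)

lemma bI_le {a p : ℝ} (ha : 0 < a) (hp : 0 < p) : bI a p ≤ (1 / a) ^ p * Real.Gamma p := by
  rw [← Real.integral_rpow_mul_exp_neg_mul_Ioi hp ha]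
  unfold bI
  apply setIntegral_mono_on (bphi_int ha (by linarith)) (gam_int (by linarith) ha) measurableSet_Ioi
  intro t ht
  have ht : 0 < t := ht
  have := bphi_le ha ht
  gcongr

lemma bI_rec {a p : ℝ} (ha : 0 < a) (hp : 0 < p) :
    a * bI a (p + 1) = p * bI a p + a * bI a (p - 1) := by
  have i1 := bphi_int (s := p + 1 - 1) ha (by linarith)
  have i2 := bphi_int (s := p - 1) ha (by linarith)
  have i3 := bphi_int (s := p - 1 - 1) ha (by linarith)
  have key := integral_Ioi_of_hasDerivAt_of_tendsto (a := (0:ℝ)) (m := (0:ℝ))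
    (f := fun t => t ^ p * bphi a t)
    (f' := fun t => p * (t ^ (p - 1) * bphi a t) - a * (t ^ (p + 1 - 1) * bphi a t)
      + a * (t ^ (p - 1 - 1) * bphi a t)) ?_ ?_ ?_ ?_
  · have i12 : Integrable (fun t => p * (t ^ (p - 1) * bphi a t)
        - a * (t ^ (p + 1 - 1) * bphi a t)) (volume.restrict (Ioi 0)) :=
      (i2.const_mul p).sub (i1.const_mul a)
    rw [integral_add i12 (i3.const_mul a),
      integral_sub (i2.const_mul p) (i1.const_mul a), integral_const_mul, integral_const_mul,
      integral_const_mul] at key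
    simp only [Real.zero_rpow hp.ne', zero_mul, sub_zero] at key
    unfold bI
    linarith
  · unfold ContinuousWithinAt
    simp only [Real.zero_rpow hp.ne', zero_mul]
    have h0 : Filter.Tendsto (fun t : ℝ => t ^ p) (nhdsWithin 0 (Ici 0)) (nhds 0) := by
      have : ContinuousAt (fun t : ℝ => t ^ p) 0 := Real.continuousAt_rpow_const _ _ (Or.inr hp.le)
      have := this.tendsto
      rw [Real.zero_rpow hp.ne'] at this
      exact this.mono_left nhdsWithin_le_nhds
    refine squeeze_zero' ?_ ?_ h0
    · filter_upwards [self_mem_nhdsWithin] with t ht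
      exact mul_nonneg (Real.rpow_nonneg ht _) (bphi_pos a t).le
    · filter_upwards [self_mem_nhdsWithin] with t ht
      have ht : 0 ≤ t := ht
      have : bphi a t ≤ 1 := by
        unfold bphi
        apply Real.exp_le_one_iff.2
        have : 0 ≤ a / t := by positivity
        have : 0 ≤ a * t := by positivity
        linarith
      exact mul_le_of_le_one_right (Real.rpow_nonneg ht _) this
  · intro t ht
    have ht : 0 < t := ht
    have d1 : HasDerivAt (fun t : ℝ => t ^ p) (p * t ^ (p - 1)) t :=
      Real.hasDerivAt_rpow_const (Or.inl ht.ne')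
    have d2 : HasDerivAt (fun t : ℝ => -(a * t) - a / t) (-a + a / t ^ 2) t := by
      have e1 : HasDerivAt (fun t : ℝ => a * t) a t := by
        simpa using (hasDerivAt_id t).const_mul a
      have e2 := (hasDerivAt_inv ht.ne').const_mul a
      have := e1.neg.sub e2
      refine (this.congr_deriv ?_)
      field_simp
      ring
    have := d1.mul d2.exp
    refine this.congr_deriv ?_
    rw [add_sub_cancel_right, Real.rpow_sub_one ht.ne' (p - 1), Real.rpow_sub_one ht.ne' p]
    change _ * bphi a t + _ * (bphi a t * _) = _
    field_simp
    ring
  · exact ((i2.const_mul p).sub (i1.const_mul a)).add (i3.const_mul a)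
  · refine squeeze_zero' ?_ ?_ (tendsto_rpow_mul_exp_neg_mul_atTop_nhds_zero p a ha)
    · filter_upwards [Filter.eventually_gt_atTop 0] with t ht
      exact mul_nonneg (Real.rpow_nonneg ht.le _) (bphi_pos a t).le
    · filter_upwards [Filter.eventually_gt_atTop 0] with t ht
      have := bphi_le ha ht
      rw [neg_mul]
      gcongr

lemma exp_sign_pos {A B : ℝ} (h : A ≠ B) : 0 < (A - B) * (Real.exp A - Real.exp B) := by
  rcases lt_or_gt_of_ne h with h | h
  · exact mul_pos_of_neg_of_neg (by linarith) (by linarith [Real.exp_lt_exp.2 h])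
  · exact mul_pos (by linarith) (by linarith [Real.exp_lt_exp.2 h])

lemma core {a b c v : ℝ} (ha : 0 < a) (hb : 0 < b) (hba : b < a) (hc : 0 < c) (hc1 : c < 1)
    (hv : 1 < v) :
    0 < (b - a) * (bI a (v + 1) - c * ((1 / b) ^ (v + 1) * Real.Gamma (v + 1)))
      + (-Real.log c) * (bI a v - c * ((1 / b) ^ v * Real.Gamma v))
      - a * (bI a (v - 1) - c * ((1 / b) ^ (v - 1) * Real.Gamma (v - 1))) := by
  have hL : 0 < -Real.log c := by linarith [Real.log_neg hc hc1]
  set L := -Real.log c with hLdef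
  let h : ℝ → ℝ → ℝ := fun p t => t ^ (p - 1) * bphi a t - c * (t ^ (p - 1) * Real.exp (-(b * t)))
  have hIntg : ∀ p, 0 < p → IntegrableOn (h p) (Ioi 0) := fun p hp =>
    (bphi_int ha (by linarith)).sub ((gam_int (by linarith) hb).const_mul c)
  have hval : ∀ p, 0 < p → ∫ t in Ioi 0, h p t = bI a p - c * ((1 / b) ^ p * Real.Gamma p) := by
    intro p hp
    rw [← Real.integral_rpow_mul_exp_neg_mul_Ioi hp hb]
    simp only [h]
    rw [integral_sub (bphi_int ha (by linarith)) ((gam_int (by linarith) hb).const_mul c),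
      integral_const_mul]
    rfl
  rw [← hval (v + 1) (by linarith), ← hval v (by linarith), ← hval (v - 1) (by linarith)]
  have j1 := (hIntg (v + 1) (by linarith)).const_mul (b - a)
  have j2 := (hIntg v (by linarith)).const_mul L
  have j3 := (hIntg (v - 1) (by linarith)).const_mul a
  have j12 : Integrable (fun t => (b - a) * h (v + 1) t + L * h v t) (volume.restrict (Ioi 0)) :=
    j1.add j2
  rw [← integral_const_mul, ← integral_const_mul, ← integral_const_mul,
    ← integral_add j1 j2, ← integral_sub j12 j3]
  have hform : ∀ t : ℝ, 0 < t →
      (b - a) * h (v + 1) t + L * h v t - a * h (v - 1) t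
      = t ^ (v - 1) * (((-(a * t) - a / t) - (-L - b * t)) *
          (Real.exp (-(a * t) - a / t) - Real.exp (-L - b * t))) := by
    intro t ht
    have e1 : Real.exp (-L - b * t) = c * Real.exp (-(b * t)) := by
      rw [sub_eq_add_neg, Real.exp_add, hLdef, neg_neg, Real.exp_log hc]
    rw [e1]
    simp only [h, bphi]
    rw [add_sub_cancel_right, Real.rpow_sub_one ht.ne' (v - 1), Real.rpow_sub_one ht.ne' v]
    field_simp
    ring
  have hnn : ∀ t : ℝ, 0 < t → 0 ≤ (b - a) * h (v + 1) t + L * h v t - a * h (v - 1) t := by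
    intro t ht
    rw [hform t ht]
    apply mul_nonneg (Real.rpow_nonneg ht.le _)
    by_cases hh : (-(a * t) - a / t) = (-L - b * t)
    · rw [hh]; simp
    · exact (exp_sign_pos hh).le
  rw [setIntegral_pos_iff_support_of_nonneg_ae]
  · have hs : Ioo 0 (a / L) ⊆ Function.support (fun t : ℝ =>
        (b - a) * h (v + 1) t + L * h v t - a * h (v - 1) t) ∩ Ioi 0 := by
      rintro t ⟨ht, ht2⟩
      refine ⟨?_, ht⟩
      rw [Function.mem_support, hform t ht]
      refine (mul_pos (Real.rpow_pos_of_pos ht _) (exp_sign_pos ?_)).ne'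
      have h3 : L < a / t := by
        rw [lt_div_iff₀ hL] at ht2
        rw [lt_div_iff₀ ht]; linarith
      have h4 : b * t < a * t := by gcongr
      apply ne_of_lt
      linarith
    refine lt_of_lt_of_le ?_ (measure_mono hs)
    rw [Real.volume_Ioo, ENNReal.ofReal_pos]
    have : 0 < a / L := by positivity
    linarith
  · filter_upwards [ae_restrict_mem measurableSet_Ioi] with t ht
    exact hnn t ht
  · exact (j1.add j2).sub j3

lemma turan {a v : ℝ} (ha : 0 < a) (hv : 1 < v) :
    (v - 1) * (bI a (v + 1) * bI a (v - 1)) < v * bI a v ^ 2 := by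
  have r1 := bI_rec (p := v) ha (by linarith)
  have r2 := bI_rec (p := v - 1) ha (by linarith)
  rw [sub_add_cancel] at r2
  have p0 := bI_pos (p := v - 1 - 1) ha (by linarith)
  have pA := bI_pos (p := v - 1) ha (by linarith)
  have pB := bI_pos (p := v) ha (by linarith)
  have pC := bI_pos (p := v + 1) ha (by linarith)
  have le := bI_le (p := v - 1) ha (by linarith)
  have hg := Real.Gamma_pos_of_pos (s := v - 1) (by linarith)
  have g1 := Real.Gamma_add_one (s := v - 1) (by linarith)
  have g2 := Real.Gamma_add_one (s := v) (by linarith)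
  rw [sub_add_cancel] at g1
  have hcore := fun b c => core (a := a) (b := b) (c := c) (v := v) ha
  set A := bI a (v - 1)
  set B := bI a v
  set C := bI a (v + 1)
  set g := Real.Gamma (v - 1)
  have hv1 : 0 < v - 1 := by linarith
  have hv0 : 0 < v := by linarith
  set b := Real.sqrt (v * (v - 1) * A / C) with hbdef
  have hb : 0 < b := Real.sqrt_pos.2 (by positivity)
  have hb2 : b ^ 2 = v * (v - 1) * A / C := Real.sq_sqrt (by positivity)
  have hba : b < a := by
    apply lt_of_pow_lt_pow_left₀ 2 ha.le
    rw [hb2, div_lt_iff₀ pC]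
    have h1 : (v - 1) * A < a * B := by nlinarith
    have h2 : v * B < a * C := by nlinarith
    nlinarith
  set c := A * b ^ (v - 1) / g with hcdef
  have hbp : 0 < b ^ (v - 1) := Real.rpow_pos_of_pos hb _
  have hc : 0 < c := by positivity
  have hc1 : c < 1 := by
    rw [hcdef, div_lt_one hg]
    have hab : b ^ (v - 1) < a ^ (v - 1) := Real.rpow_lt_rpow hb.le hba hv1
    have hap : 0 < a ^ (v - 1) := Real.rpow_pos_of_pos ha _
    rw [one_div, Real.inv_rpow ha.le] at le
    calc A * b ^ (v - 1) < A * a ^ (v - 1) := by gcongr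
      _ ≤ ((a ^ (v - 1))⁻¹ * g) * a ^ (v - 1) := by gcongr
      _ = g := by field_simp
  have key := hcore b c hb hba hc hc1 hv
  have hL : 0 < -Real.log c := by linarith [Real.log_neg hc hc1]
  have e0 : c * ((1 / b) ^ (v - 1) * g) = A := by
    rw [one_div, Real.inv_rpow hb.le, hcdef]; field_simp
  have s1 : (1 / b) ^ v = (1 / b) ^ (v - 1) * (1 / b) := by
    rw [← Real.rpow_add_one (by positivity), sub_add_cancel]
  have s2 : (1 / b) ^ (v + 1) = (1 / b) ^ v * (1 / b) := by
    rw [← Real.rpow_add_one (by positivity)]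
  have e1 : c * ((1 / b) ^ v * Real.Gamma v) = A * (v - 1) / b := by
    rw [s1, g1, ← e0]; ring
  have e2 : c * ((1 / b) ^ (v + 1) * Real.Gamma (v + 1)) = C := by
    have : c * ((1 / b) ^ (v + 1) * Real.Gamma (v + 1)) = A * (v * (v - 1)) / b ^ 2 := by
      rw [s2, s1, g2, g1, ← e0]; ring
    rw [this, hb2]; field_simp
  rw [e0, e1, e2] at key
  simp only [sub_self, mul_zero, zero_add, sub_zero] at key
  have hD : A * (v - 1) / b < B := by
    have := (pos_iff_pos_of_mul_pos key).1 hL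
    linarith
  have hsq : (A * (v - 1) / b) ^ 2 < B ^ 2 := by gcongr
  rw [div_pow, hb2] at hsq
  have : (A * (v - 1)) ^ 2 / (v * (v - 1) * A / C) = (v - 1) * (C * A) / v := by
    field_simp
  rw [this, div_lt_iff₀ hv0] at hsq
  linarith

lemma besselK_eq {p x : ℝ} (hp : 0 < p) (hx : 0 < x) :
    besselK p x = bI (x / 2) p / 2 := by
  have himg : Real.exp '' univ = Ioi 0 := by rw [image_univ, Real.range_exp]
  have hder : ∀ t ∈ (univ : Set ℝ), HasDerivWithinAt Real.exp (Real.exp t) univ t :=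
    fun t _ => (Real.hasDerivAt_exp t).hasDerivWithinAt
  have hinj : InjOn Real.exp univ := Real.exp_injective.injOn
  have hfun : ∀ t : ℝ, |Real.exp t| • ((Real.exp t) ^ (p - 1) * bphi (x / 2) (Real.exp t))
      = Real.exp (-x * Real.cosh t) * Real.exp (p * t) := by
    intro t
    rw [abs_of_pos (Real.exp_pos t), smul_eq_mul, ← Real.exp_mul, bphi, ← Real.exp_add,
      ← Real.exp_add, ← Real.exp_add, Real.cosh_eq, Real.exp_neg]
    congr 1
    field_simp
    ring
  have hI : bI (x / 2) p = ∫ t : ℝ, Real.exp (-x * Real.cosh t) * Real.exp (p * t) := by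
    unfold bI
    rw [← himg, integral_image_eq_integral_abs_deriv_smul MeasurableSet.univ hder hinj]
    simp only [hfun, Measure.restrict_univ]
  have hIntg : Integrable (fun t : ℝ => Real.exp (-x * Real.cosh t) * Real.exp (p * t)) := by
    have h := bphi_int (a := x / 2) (s := p - 1) (by positivity) (by linarith)
    rw [← himg, integrableOn_image_iff_integrableOn_abs_deriv_smul MeasurableSet.univ hder hinj] at h
    simpa only [hfun, integrableOn_univ] using h
  have hneg := integral_neg_eq_self (fun t : ℝ => Real.exp (-x * Real.cosh t) * Real.exp (p * t))
    volume
  have habs := integral_comp_abs (f := fun t : ℝ => Real.exp (-x * Real.cosh t) * Real.cosh (p * t))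
  have hfe : ∀ t : ℝ, Real.exp (-x * Real.cosh |t|) * Real.cosh (p * |t|)
      = (Real.exp (-x * Real.cosh t) * Real.exp (p * t)
        + Real.exp (-x * Real.cosh (-t)) * Real.exp (p * (-t))) / 2 := by
    intro t
    have : Real.cosh (p * |t|) = Real.cosh (p * t) := by
      rw [← Real.cosh_abs (p * t), abs_mul, abs_of_pos hp]
    rw [Real.cosh_abs, this, Real.cosh_neg, Real.cosh_eq (p * t), mul_neg]
    ring
  simp only [hfe] at habs
  rw [integral_div, integral_add hIntg hIntg.comp_neg, hneg, ← hI] at habs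
  unfold besselK
  linarith

theorem besselK_ratio_upper_bound_20 (ν x : ℝ) (hν : 1 < ν) (hx : 0 < x) :
    besselK (ν + 1) x / besselK ν x <
      (ν + Real.sqrt (ν ^ 2 + (ν / (ν - 1)) * x ^ 2)) / x := by
  have ha : 0 < x / 2 := by positivity
  rw [besselK_eq (by linarith) hx, besselK_eq (by linarith) hx]
  have ht := turan ha hν
  have hr := bI_rec (p := ν) ha (by linarith)
  have pB := bI_pos (p := ν) ha (by linarith)
  set A := bI (x / 2) (ν - 1)
  set B := bI (x / 2) ν
  set C := bI (x / 2) (ν + 1)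
  have hv1 : 0 < ν - 1 := by linarith
  rw [div_div_div_cancel_right₀ (by norm_num), div_lt_div_iff₀ pB hx]
  have hA : x * A = x * C - 2 * ν * B := by linarith
  have hlt : C * x / B - ν < Real.sqrt (ν ^ 2 + (ν / (ν - 1)) * x ^ 2) := by
    apply Real.lt_sqrt_of_sq_lt
    have h1 : C * A < ν / (ν - 1) * B ^ 2 := by
      rw [div_mul_eq_mul_div, lt_div_iff₀ hv1]; linarith
    have h2 : (C * x / B - ν) ^ 2 = ν ^ 2 + x ^ 2 * (C * A) / B ^ 2 := by
      have : x ^ 2 * (C * A) = x * C * (x * A) := by ring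
      rw [this, hA]
      field_simp
      ring
    rw [h2, add_lt_add_iff_left, div_lt_iff₀ (by positivity)]
    have : 0 < x ^ 2 := by positivity
    nlinarith
  have h3 : C * x / B < ν + Real.sqrt (ν ^ 2 + (ν / (ν - 1)) * x ^ 2) := by linarith
  rwa [div_lt_iff₀ pB] at h3
end

section
/- For every ν ≥ 1/2 and every x > 0, K_{ν+1}(x)/K_ν(x) ≤ (ν + 1/2 + √(ν² − 1/4 + x²))/x, with strict inequality when ν > 1/2 (when ν = 1/2 the two sides are identically equal). -/
open MeasureTheory Set Filter Topology

lemma bk_bound (ν x t : ℝ) (hx : 0 < x) (ht : 0 ≤ t) :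
    Real.exp (-x * Real.cosh t) * Real.exp (|ν| * t) ≤
      Real.exp (2 * ν ^ 2 / x) * Real.exp (-(x / 8) * t ^ 2) := by
  rw [← Real.exp_add, ← Real.exp_add]
  apply Real.exp_le_exp.mpr
  have h1 : t ^ 2 / 4 ≤ Real.cosh t := by
    rw [Real.cosh_eq]
    have := Real.quadratic_le_exp_of_nonneg ht
    have := Real.exp_pos (-t)
    linarith
  have h2 : |ν| * t ≤ x / 8 * t ^ 2 + 2 * ν ^ 2 / x := by
    have : x / 8 * t ^ 2 + 2 * ν ^ 2 / x - |ν| * t = (x * t - 4 * |ν|) ^ 2 / (8 * x) := by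
      field_simp
      rw [← sq_abs ν]
      ring
    have h3 : 0 ≤ (x * t - 4 * |ν|) ^ 2 / (8 * x) := by positivity
    linarith
  nlinarith [mul_le_mul_of_nonneg_left h1 hx.le]

lemma bk_cosh_le (ν t : ℝ) (ht : 0 ≤ t) : Real.cosh (ν * t) ≤ Real.exp (|ν| * t) := by
  rw [← Real.cosh_abs, abs_mul, abs_of_nonneg ht, Real.cosh_eq]
  have : Real.exp (-(|ν| * t)) ≤ Real.exp (|ν| * t) := by
    apply Real.exp_le_exp.mpr
    have : 0 ≤ |ν| * t := by positivity
    linarith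
  linarith

lemma bk_int (ν x : ℝ) (hx : 0 < x) :
    IntegrableOn (fun t => Real.exp (-x * Real.cosh t) * Real.cosh (ν * t)) (Ioi 0) := by
  have h := ((integrable_exp_neg_mul_sq (b := x / 8) (by positivity)).const_mul
    (Real.exp (2 * ν ^ 2 / x))).integrableOn (s := Ioi (0 : ℝ))
  refine Integrable.mono' h (by
    apply Continuous.aestronglyMeasurable
    fun_prop) ?_
  filter_upwards [ae_restrict_mem measurableSet_Ioi] with t ht
  have ht : 0 ≤ t := le_of_lt ht
  rw [Real.norm_of_nonneg (by have := Real.cosh_pos (ν * t); positivity)]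
  refine le_trans ?_ (bk_bound ν x t hx ht)
  gcongr
  exact bk_cosh_le ν t ht

lemma bk_pos (ν x : ℝ) (hx : 0 < x) : 0 < besselK ν x := by
  unfold besselK
  have hp : ∀ t : ℝ, 0 < Real.exp (-x * Real.cosh t) * Real.cosh (ν * t) := fun t =>
    mul_pos (Real.exp_pos _) (Real.cosh_pos _)
  rw [setIntegral_pos_iff_support_of_nonneg_ae
    (Eventually.of_forall fun t => (hp t).le) (bk_int ν x hx)]
  have : Function.support (fun t => Real.exp (-x * Real.cosh t) * Real.cosh (ν * t)) = univ := by
    ext t; simpa using (hp t).ne'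
  rw [this]; simp

lemma bk_rec (ν x : ℝ) (hx : 0 < x) :
    x * besselK (ν + 1) x = x * besselK (ν - 1) x + 2 * ν * besselK ν x := by
  have hd : ∀ t ∈ Ici (0 : ℝ), HasDerivAt
      (fun t => Real.exp (-x * Real.cosh t) * Real.sinh (ν * t))
      (ν * (Real.exp (-x * Real.cosh t) * Real.cosh (ν * t)) -
        x / 2 * (Real.exp (-x * Real.cosh t) * Real.cosh ((ν + 1) * t)) +
        x / 2 * (Real.exp (-x * Real.cosh t) * Real.cosh ((ν - 1) * t))) t := by
    intro t _
    have h1 := ((Real.hasDerivAt_cosh t).const_mul (-x)).exp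
    have h2 := ((hasDerivAt_id t).const_mul ν).sinh
    refine (h1.mul h2).congr_deriv ?_
    have e1 : (ν + 1) * t = ν * t + t := by ring
    have e2 : (ν - 1) * t = ν * t - t := by ring
    rw [e1, e2, Real.cosh_add, Real.cosh_sub]
    simp only [id]
    ring
  have i0 := (bk_int ν x hx).const_mul ν
  have i1 := (bk_int (ν + 1) x hx).const_mul (x / 2)
  have i2 := (bk_int (ν - 1) x hx).const_mul (x / 2)
  have ht : Tendsto (fun t => Real.exp (-x * Real.cosh t) * Real.sinh (ν * t)) atTop (𝓝 0) := by
    have hg : Tendsto (fun t : ℝ => Real.exp (2 * ν ^ 2 / x) * Real.exp (-(x / 8) * t ^ 2))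
        atTop (𝓝 0) := by
      rw [← mul_zero (Real.exp (2 * ν ^ 2 / x))]
      apply Tendsto.const_mul
      apply Real.tendsto_exp_atBot.comp
      exact (tendsto_pow_atTop two_ne_zero).const_mul_atTop_of_neg (by linarith)
    refine squeeze_zero_norm' ?_ hg
    filter_upwards [eventually_ge_atTop 0] with t ht
    refine le_trans ?_ (bk_bound ν x t hx ht)
    rw [norm_mul, Real.norm_of_nonneg (Real.exp_pos _).le]
    gcongr
    refine le_trans ?_ (bk_cosh_le ν t ht)
    rw [Real.norm_eq_abs, abs_le]
    constructor
    · have := Real.cosh_add_sinh (ν * t)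
      have := Real.exp_pos (ν * t)
      linarith
    · exact (Real.sinh_lt_cosh _).le
  have h := integral_Ioi_of_hasDerivAt_of_tendsto' hd ((i0.sub i1).add i2) ht
  have e : ∫ t in Ioi (0 : ℝ), (ν * (Real.exp (-x * Real.cosh t) * Real.cosh (ν * t)) -
        x / 2 * (Real.exp (-x * Real.cosh t) * Real.cosh ((ν + 1) * t)) +
        x / 2 * (Real.exp (-x * Real.cosh t) * Real.cosh ((ν - 1) * t))) =
      ν * besselK ν x - x / 2 * besselK (ν + 1) x + x / 2 * besselK (ν - 1) x := by
    unfold besselK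
    rw [← integral_const_mul, ← integral_const_mul, ← integral_const_mul,
      ← integral_sub i0 i1]
    exact integral_add (i0.sub i1) i2
  rw [e] at h
  simp at h
  linarith

lemma bk_deriv (ν x : ℝ) (hx : 0 < x) :
    HasDerivAt (besselK ν) (-(besselK (ν + 1) x + besselK (ν - 1) x) / 2) x := by
  have key : ∀ y t : ℝ, Real.cosh t * (Real.exp (-y * Real.cosh t) * Real.cosh (ν * t)) =
      (1 / 2) * (Real.exp (-y * Real.cosh t) * Real.cosh ((ν + 1) * t)) +
      (1 / 2) * (Real.exp (-y * Real.cosh t) * Real.cosh ((ν - 1) * t)) := by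
    intro y t
    have e1 : (ν + 1) * t = ν * t + t := by ring
    have e2 : (ν - 1) * t = ν * t - t := by ring
    rw [e1, e2, Real.cosh_add, Real.cosh_sub]
    ring
  have hi : ∀ y : ℝ, 0 < y → IntegrableOn (fun t => Real.cosh t *
      (Real.exp (-y * Real.cosh t) * Real.cosh (ν * t))) (Ioi 0) := by
    intro y hy
    simp_rw [key]
    exact ((bk_int (ν + 1) y hy).const_mul (1 / 2)).add ((bk_int (ν - 1) y hy).const_mul (1 / 2))
  have h := hasDerivAt_integral_of_dominated_loc_of_deriv_le
    (μ := volume.restrict (Ioi (0 : ℝ)))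
    (F := fun y t => Real.exp (-y * Real.cosh t) * Real.cosh (ν * t))
    (F' := fun y t => -(Real.cosh t * (Real.exp (-y * Real.cosh t) * Real.cosh (ν * t))))
    (bound := fun t => Real.cosh t * (Real.exp (-(x / 2) * Real.cosh t) * Real.cosh (ν * t)))
    (x₀ := x) (s := Ioi (x / 2)) (Ioi_mem_nhds (by linarith))
    (Eventually.of_forall fun y => by
      apply Continuous.aestronglyMeasurable
      fun_prop)
    (bk_int ν x hx)
    (by
      apply Continuous.aestronglyMeasurable
      fun_prop)
    (Eventually.of_forall fun t y hy => by
      have c1 := Real.cosh_pos t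
      have c2 := Real.cosh_pos (ν * t)
      rw [norm_neg, Real.norm_of_nonneg (by positivity)]
      have : x / 2 ≤ y := le_of_lt hy
      gcongr)
    (hi (x / 2) (by linarith))
    (Eventually.of_forall fun t y _ => by
      have h1 := ((((hasDerivAt_id y).neg).mul_const (Real.cosh t)).exp).mul_const
        (Real.cosh (ν * t))
      refine h1.congr_deriv ?_
      simp only [id, Pi.neg_apply]
      ring)
  refine h.2.congr_deriv ?_
  rw [integral_neg]
  simp_rw [key]
  rw [integral_add ((bk_int (ν + 1) x hx).const_mul (1 / 2))
    ((bk_int (ν - 1) x hx).const_mul (1 / 2)), integral_const_mul, integral_const_mul]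
  unfold besselK
  ring

lemma bk_decay (ν x : ℝ) (hx : 1 ≤ x) :
    besselK ν x ≤ Real.exp (1 - x) * besselK ν 1 := by
  unfold besselK
  rw [← integral_const_mul]
  apply integral_mono (bk_int ν x (by linarith)) ((bk_int ν 1 one_pos).const_mul _)
  intro t
  have c2 := Real.cosh_pos (ν * t)
  simp only
  rw [← mul_assoc, ← Real.exp_add]
  gcongr
  nlinarith [Real.one_le_cosh t]

lemma bk_tendsto (ν : ℝ) : Tendsto (fun x => x * besselK ν x) atTop (𝓝 0) := by
  have h := (Real.tendsto_pow_mul_exp_neg_atTop_nhds_zero 1).mul_const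
    (Real.exp 1 * besselK ν 1)
  rw [zero_mul] at h
  refine squeeze_zero' ?_ ?_ h
  · filter_upwards [eventually_ge_atTop 1] with x hx
    have := bk_pos ν x (by linarith)
    positivity
  · filter_upwards [eventually_ge_atTop 1] with x hx
    have h1 := bk_decay ν x hx
    have : Real.exp (1 - x) = Real.exp (-x) * Real.exp 1 := by
      rw [← Real.exp_add]; ring_nf
    rw [this] at h1
    have := mul_le_mul_of_nonneg_left h1 (by linarith : 0 ≤ x)
    simpa [mul_assoc] using this

lemma bk_strict (ν x : ℝ) (hν : 1 / 2 < ν) (hx : 0 < x) :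
    x * besselK (ν + 1) x <
      (ν + 1 / 2 + Real.sqrt (ν ^ 2 - 1 / 4 + x ^ 2)) * besselK ν x := by
  have ha : 0 < ν ^ 2 - 1 / 4 := by nlinarith
  set G : ℝ → ℝ := fun y => y * besselK (ν + 1) y -
    (ν + 1 / 2 + Real.sqrt (ν ^ 2 - 1 / 4 + y ^ 2)) * besselK ν y with hG
  have hd : ∀ y, 0 < y → HasDerivAt G
      (((1 / 2 + Real.sqrt (ν ^ 2 - 1 / 4 + y ^ 2)) * G y +
        (ν ^ 2 - 1 / 4) / Real.sqrt (ν ^ 2 - 1 / 4 + y ^ 2) * besselK ν y) / y) y := by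
    intro y hy
    have hp : 0 < ν ^ 2 - 1 / 4 + y ^ 2 := by positivity
    have hs : HasDerivAt (fun y : ℝ => Real.sqrt (ν ^ 2 - 1 / 4 + y ^ 2))
        (y / Real.sqrt (ν ^ 2 - 1 / 4 + y ^ 2)) y := by
      refine ((((hasDerivAt_id y).pow 2).const_add (ν ^ 2 - 1 / 4)).sqrt hp.ne').congr_deriv ?_
      simp only [id, Pi.pow_apply]
      have := Real.sqrt_pos.mpr hp
      field_simp
      simp
    have h1 := bk_deriv (ν + 1) y hy
    have h0 := bk_deriv ν y hy
    have r1 := bk_rec (ν + 1) y hy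
    have r0 := bk_rec ν y hy
    rw [add_sub_cancel_right] at h1 r1
    have h := ((hasDerivAt_id y).mul h1).sub ((hs.const_add (ν + 1 / 2)).mul h0)
    refine h.congr_deriv ?_
    have hsp := Real.sqrt_pos.mpr hp
    have hsq := Real.sq_sqrt hp.le
    simp only [hG, id]
    set s := Real.sqrt (ν ^ 2 - 1 / 4 + y ^ 2)
    have q1 : besselK (ν + 1 + 1) y = besselK ν y + 2 * (ν + 1) * besselK (ν + 1) y / y := by
      field_simp; linarith
    have q0 : besselK (ν - 1) y = besselK (ν + 1) y - 2 * ν * besselK ν y / y := by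
      field_simp; linarith
    rw [q1, q0]
    have ea : ν ^ 2 - 1 / 4 = s ^ 2 - y ^ 2 := by linarith
    rw [ea]
    field_simp
    linear_combination 4 * besselK ν y * s * hsq
  have hpos : ∀ y, 0 < y → 0 ≤ G y →
      0 < (((1 / 2 + Real.sqrt (ν ^ 2 - 1 / 4 + y ^ 2)) * G y +
        (ν ^ 2 - 1 / 4) / Real.sqrt (ν ^ 2 - 1 / 4 + y ^ 2) * besselK ν y) / y) := by
    intro y hy hg
    have hp : 0 < ν ^ 2 - 1 / 4 + y ^ 2 := by positivity
    have hsp := Real.sqrt_pos.mpr hp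
    have := bk_pos ν y hy
    positivity
  by_contra! hcon
  have hg0 : 0 ≤ G x := by simp only [hG]; linarith
  -- a point to the right with larger value
  obtain ⟨x1, hx1, hgx1⟩ : ∃ x1, x < x1 ∧ G x < G x1 := by
    have hslope := (hasDerivAt_iff_tendsto_slope.mp (hd x hx)).mono_left
      (nhdsWithin_mono x (fun z (hz : z ∈ Ioi x) => ne_of_gt hz))
    have hev := hslope.eventually (lt_mem_nhds (hpos x hx hg0))
    obtain ⟨z, hz1, hz2⟩ := (hev.and self_mem_nhdsWithin).exists
    have hz2 : x < z := hz2
    refine ⟨z, hz2, ?_⟩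
    rw [slope_def_field] at hz1
    have := (div_pos_iff_of_pos_right (sub_pos.mpr hz2)).mp hz1
    linarith
  have hpos1 : 0 < G x1 := by linarith
  obtain ⟨X, hX1, hX2⟩ := (((bk_tendsto (ν + 1)).eventually (gt_mem_nhds hpos1)).and
    (eventually_gt_atTop x1)).exists
  have hGX : G X < G x1 := by
    have hXp : 0 < X := by linarith
    have := bk_pos ν X hXp
    have : 0 ≤ (ν + 1 / 2 + Real.sqrt (ν ^ 2 - 1 / 4 + X ^ 2)) * besselK ν X := by positivity
    have hGd : G X = X * besselK (ν + 1) X -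
      (ν + 1 / 2 + Real.sqrt (ν ^ 2 - 1 / 4 + X ^ 2)) * besselK ν X := rfl
    linarith
  have hcont : ContinuousOn G (Icc x X) := fun y hy =>
    (hd y (lt_of_lt_of_le hx hy.1)).continuousAt.continuousWithinAt
  obtain ⟨m, hm, hmax⟩ := isCompact_Icc.exists_isMaxOn (nonempty_Icc.mpr (by linarith)) hcont
  have hm1 : G x1 ≤ G m := hmax ⟨hx1.le, hX2.le⟩
  have hmx : x < m := lt_of_le_of_ne hm.1 (by rintro rfl; linarith)
  have hmX : m < X := lt_of_le_of_ne hm.2 (by rintro rfl; linarith)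
  have hloc : IsLocalMax G m := hmax.isLocalMax (Icc_mem_nhds hmx hmX)
  have hm0 : 0 < m := hx.trans hmx
  have := hloc.hasDerivAt_eq_zero (hd m hm0)
  have := hpos m hm0 (by linarith)
  linarith

lemma bk_eq (x : ℝ) (hx : 0 < x) :
    besselK (1 / 2 + 1) x / besselK (1 / 2) x =
        (1 / 2 + 1 / 2 + Real.sqrt ((1 / 2) ^ 2 - 1 / 4 + x ^ 2)) / x := by
  have hp := bk_pos (1 / 2) x hx
  have h := bk_rec (1 / 2) x hx
  have e : besselK (1 / 2 - 1) x = besselK (1 / 2) x := by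
    unfold besselK
    congr 1
    ext t
    have e2 : (1 / 2 - 1) * t = -(1 / 2 * t) := by ring
    rw [e2, Real.cosh_neg]
  rw [e] at h
  have : ((1 : ℝ) / 2) ^ 2 - 1 / 4 + x ^ 2 = x ^ 2 := by ring
  rw [this, Real.sqrt_sq hx.le, div_eq_div_iff hp.ne' hx.ne']
  linarith

theorem besselK_ratio_upper_bound_03 (ν x : ℝ) (hν : 1 / 2 ≤ ν) (hx : 0 < x) :
    (besselK (ν + 1) x / besselK ν x ≤
      (ν + 1 / 2 + Real.sqrt (ν ^ 2 - 1 / 4 + x ^ 2)) / x) ∧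
    (1 / 2 < ν →
      besselK (ν + 1) x / besselK ν x <
        (ν + 1 / 2 + Real.sqrt (ν ^ 2 - 1 / 4 + x ^ 2)) / x) ∧
    (ν = 1 / 2 →
      besselK (ν + 1) x / besselK ν x =
        (ν + 1 / 2 + Real.sqrt (ν ^ 2 - 1 / 4 + x ^ 2)) / x) := by
  have hlt : 1 / 2 < ν → besselK (ν + 1) x / besselK ν x <
        (ν + 1 / 2 + Real.sqrt (ν ^ 2 - 1 / 4 + x ^ 2)) / x := by
    intro h
    rw [div_lt_div_iff₀ (bk_pos ν x hx) hx]
    linarith [bk_strict ν x h hx]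
  have heq : ν = 1 / 2 → besselK (ν + 1) x / besselK ν x =
        (ν + 1 / 2 + Real.sqrt (ν ^ 2 - 1 / 4 + x ^ 2)) / x := by
    rintro rfl
    exact bk_eq x hx
  refine ⟨?_, hlt, heq⟩
  rcases hν.lt_or_eq with h | h
  · exact (hlt h).le
  · exact (heq h.symm).le
end

section
/- Let ν ≥ 1/2 and set φ₋(x) = x·I_{ν−1}(x)/I_ν(x) and φ₊(x) = x·K_{ν+1}(x)/K_ν(x) for x > 0. Then for all x > 0: (i) 0 < φ₋′(x) ≤ 1 and 0 < φ₊′(x) ≤ 1; (ii) ν + √(ν² + x(x − 1)) < φ₋(x) ≤ ν + √(ν² + x(x + 1)) and ν + √(ν² + x(x − 1)) < φ₊(x) ≤ ν + √(ν² + x(x + 1)); moreover equality in the non-strict inequalities of (i) and (ii) occurs only for φ₊ in the case ν = 1/2. -/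
/-- The modified Bessel function of the first kind,
`I_ν(x) = ∑_{k=0}^∞ (x/2)^{2k+ν} / (k! Γ(k+ν+1))`
(here `1/Γ` vanishes at nonpositive integer arguments, since `Real.Gamma` is `0` there). -/
noncomputable def besselI (ν x : ℝ) : ℝ :=
  ∑' k : ℕ, (x / 2) ^ (2 * (k : ℝ) + ν) / ((Nat.factorial k : ℝ) * Real.Gamma ((k : ℝ) + ν + 1))

/-- `φ₋(x) = x I_{ν-1}(x)/I_ν(x)`. -/
noncomputable def phiI (ν : ℝ) : ℝ → ℝ := fun x => x * (besselI (ν - 1) x / besselI ν x)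

/-- `φ₊(x) = x K_{ν+1}(x)/K_ν(x)`. -/
noncomputable def phiK (ν : ℝ) : ℝ → ℝ := fun x => x * (besselK (ν + 1) x / besselK ν x)

open Filter Topology Set

namespace BesselAux

/-- data of the first-order system -/
structure Sys (ν : ℝ) (p q : ℝ → ℝ) : Prop where
  dp : ∀ x, 0 < x → HasDerivAt p (q x / x) x
  dq : ∀ x, 0 < x → HasDerivAt q ((x + ν ^ 2 / x) * p x) x
  pos : ∀ x, 0 < x → 0 < p x

lemma smono {f f' : ℝ → ℝ} (h : ∀ x, 0 < x → HasDerivAt f (f' x) x)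
    (h' : ∀ x, 0 < x → 0 < f' x) : StrictMonoOn f (Ioi 0) := by
  apply strictMonoOn_of_deriv_pos (convex_Ioi 0)
  · intro x hx
    exact (h x hx).continuousAt.continuousWithinAt
  · intro x hx
    rw [interior_Ioi] at hx
    rw [(h x hx).deriv]
    exact h' x hx

lemma mono {f f' : ℝ → ℝ} (h : ∀ x, 0 < x → HasDerivAt f (f' x) x)
    (h' : ∀ x, 0 < x → 0 ≤ f' x) : MonotoneOn f (Ioi 0) := by
  apply monotoneOn_of_deriv_nonneg (convex_Ioi 0)
  · intro x hx
    exact (h x hx).continuousAt.continuousWithinAt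
  · intro x hx
    rw [interior_Ioi] at hx
    exact (h x hx).differentiableAt.differentiableWithinAt
  · intro x hx
    rw [interior_Ioi] at hx
    rw [(h x hx).deriv]
    exact h' x hx

lemma pos_of_zero {f : ℝ → ℝ} (h : StrictMonoOn f (Ioi 0)) (h0 : Tendsto f (𝓝[>] 0) (𝓝 0))
    {x : ℝ} (hx : 0 < x) : 0 < f x := by
  have h1 : f (x / 2) < f x := h (by simpa using hx) hx (by linarith)
  refine lt_of_le_of_lt ?_ h1
  refine le_of_tendsto h0 ?_
  filter_upwards [Ioo_mem_nhdsGT (show (0 : ℝ) < x / 2 by linarith)] with y hy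
  exact (h hy.1 (show (0 : ℝ) < x / 2 by linarith) hy.2).le

lemma nonpos_of_top {f : ℝ → ℝ} (h : MonotoneOn f (Ioi 0)) (h0 : Tendsto f atTop (𝓝 0))
    {x : ℝ} (hx : 0 < x) : f x ≤ 0 := by
  refine ge_of_tendsto h0 ?_
  filter_upwards [eventually_ge_atTop x] with y hy
  exact h hx (lt_of_lt_of_le hx hy) hy

lemma neg_of_top {f : ℝ → ℝ} (h : StrictMonoOn f (Ioi 0)) (h0 : Tendsto f atTop (𝓝 0))
    {x : ℝ} (hx : 0 < x) : f x < 0 := by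
  have hx1 : 0 < x + 1 := by linarith
  exact lt_of_lt_of_le (h hx hx1 (by linarith)) (nonpos_of_top h.monotoneOn h0 hx1)

section
variable {ν : ℝ} {p q : ℝ → ℝ}

lemma Sys.dH (S : Sys ν p q) {x : ℝ} (hx : 0 < x) :
    HasDerivAt (fun x => (x ^ 2 + ν ^ 2) * p x ^ 2 - q x ^ 2) (2 * x * p x ^ 2) x := by
  have h := ((((hasDerivAt_id x).pow 2).add_const (ν ^ 2)).mul ((S.dp x hx).pow 2)).sub
    ((S.dq x hx).pow 2)
  refine (h.congr_deriv ?_).congr_of_eventuallyEq (Eventually.of_forall fun y => ?_)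
  · simp
    field_simp
    ring
  · simp

lemma Sys.dW (S : Sys ν p q) (s : ℝ) {x : ℝ} (hx : 0 < x) :
    HasDerivAt (fun x => x * p x ^ 2 + s * ((x ^ 2 + ν ^ 2) * p x ^ 2 - q x ^ 2))
      (2 * p x * (q x + (s * x + 1 / 2) * p x)) x := by
  have h := ((hasDerivAt_id x).mul ((S.dp x hx).pow 2)).add ((S.dH hx).const_mul s)
  refine (h.congr_deriv ?_).congr_of_eventuallyEq (Eventually.of_forall fun y => ?_)
  · simp
    field_simp
    ring
  · simp

lemma Sys.du (S : Sys ν p q) (s : ℝ) (hs : s ^ 2 = 1) {x : ℝ} (hx : 0 < x) :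
    HasDerivAt (fun x => (q x + (s * x + 1 / 2) * p x) * Real.exp (-s * x - Real.log x / 2))
      (p x * (ν ^ 2 - 1 / 4) / x * Real.exp (-s * x - Real.log x / 2)) x := by
  have h := ((S.dq x hx).add ((((hasDerivAt_id x).const_mul s).add_const (1 / 2)).mul
    (S.dp x hx))).mul
    ((((hasDerivAt_id x).const_mul (-s)).sub ((Real.hasDerivAt_log hx.ne').div_const 2)).exp)
  refine (h.congr_deriv ?_).congr_of_eventuallyEq (Eventually.of_forall fun y => ?_)
  · simp only [id, Pi.add_apply, Pi.mul_apply, Pi.sub_apply]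
    generalize Real.exp _ = E
    field_simp
    linear_combination (-16 * x ^ 2 * E * p x) * hs
  · simp

lemma Sys.dphi (S : Sys ν p q) (s : ℝ) {x : ℝ} (hx : 0 < x) :
    HasDerivAt (fun x => ν + s * (q x / p x))
      (s * (((x ^ 2 + ν ^ 2) * p x ^ 2 - q x ^ 2) / (x * p x ^ 2))) x := by
  have hp := (S.pos x hx).ne'
  have h := (((S.dq x hx).div (S.dp x hx) hp).const_mul s).const_add ν
  refine h.congr_deriv ?_
  field_simp

/-- first kind: H > 0 and W > 0 -/
lemma Sys.first (S : Sys ν p q) (hν : 1 / 2 ≤ ν) (hq : ∀ x, 0 < x → 0 < q x)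
    (p0 : Tendsto p (𝓝[>] 0) (𝓝 0)) (q0 : Tendsto q (𝓝[>] 0) (𝓝 0)) {x : ℝ} (hx : 0 < x) :
    0 < (x ^ 2 + ν ^ 2) * p x ^ 2 - q x ^ 2 ∧
    (x ^ 2 + ν ^ 2) * p x ^ 2 - q x ^ 2 < x * p x ^ 2 := by
  have i0 : Tendsto (fun x : ℝ => x) (𝓝[>] 0) (𝓝 0) := tendsto_id.mono_left nhdsWithin_le_nhds
  have H0 : Tendsto (fun x => (x ^ 2 + ν ^ 2) * p x ^ 2 - q x ^ 2) (𝓝[>] 0) (𝓝 0) := by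
    simpa using (((i0.pow 2).add_const (ν ^ 2)).mul (p0.pow 2)).sub (q0.pow 2)
  have W0 : Tendsto (fun x => x * p x ^ 2 + (-1) * ((x ^ 2 + ν ^ 2) * p x ^ 2 - q x ^ 2))
      (𝓝[>] 0) (𝓝 0) := by
    simpa using (i0.mul (p0.pow 2)).add (H0.const_mul (-1))
  have hm := mono (fun x hx => S.du (-1) (by norm_num) hx) (fun x hx => by
    have := S.pos x hx
    have : 0 ≤ ν ^ 2 - 1 / 4 := by nlinarith
    positivity)
  have hd : ∀ x, 0 < x → 0 < q x + (-1 * x + 1 / 2) * p x := by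
    intro x hx
    by_cases h : x ≤ 1 / 2
    · have := S.pos x hx
      have := hq x hx
      have : 0 ≤ -1 * x + 1 / 2 := by linarith
      positivity
    · push Not at h
      have h1 := hm (show (0 : ℝ) < 1 / 2 by norm_num) hx h.le
      have h2 : 0 < (q (1 / 2) + (-1 * (1 / 2) + 1 / 2) * p (1 / 2)) *
          Real.exp (- -1 * (1 / 2) - Real.log (1 / 2) / 2) := by
        apply mul_pos _ (Real.exp_pos _)
        have := hq (1 / 2) (by norm_num)
        linarith
      exact pos_of_mul_pos_left (lt_of_lt_of_le h2 h1) (Real.exp_pos _).le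
  constructor
  · refine pos_of_zero (smono (fun x hx => S.dH hx) (fun x hx => ?_)) H0 hx
    have := S.pos x hx
    positivity
  · have := pos_of_zero (smono (fun x hx => S.dW (-1) hx) (fun x hx => by
      have := S.pos x hx
      have := hd x hx
      positivity)) W0 hx
    linarith

/-- second kind -/
lemma Sys.second (S : Sys ν p q) (hν : 1 / 2 ≤ ν)
    (p0 : Tendsto (fun x => x * p x) atTop (𝓝 0)) (q0 : Tendsto q atTop (𝓝 0))
    {x : ℝ} (hx : 0 < x) :
    (x ^ 2 + ν ^ 2) * p x ^ 2 - q x ^ 2 < 0 ∧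
    (ν = 1 / 2 → x * p x ^ 2 + ((x ^ 2 + ν ^ 2) * p x ^ 2 - q x ^ 2) = 0) ∧
    (1 / 2 < ν → 0 < x * p x ^ 2 + ((x ^ 2 + ν ^ 2) * p x ^ 2 - q x ^ 2)) := by
  have p1 : Tendsto p atTop (𝓝 0) := by
    have := tendsto_inv_atTop_zero.mul p0
    simp only [mul_zero] at this
    refine this.congr' ?_
    filter_upwards [eventually_gt_atTop (0 : ℝ)] with y hy
    field_simp
  have H0 : Tendsto (fun x => (x ^ 2 + ν ^ 2) * p x ^ 2 - q x ^ 2) atTop (𝓝 0) := by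
    have := ((p0.pow 2).add ((p1.pow 2).const_mul (ν ^ 2))).sub (q0.pow 2)
    simp only [ne_eq, OfNat.ofNat_ne_zero, not_false_eq_true, zero_pow, mul_zero, add_zero,
      sub_zero] at this
    refine this.congr fun y => ?_
    ring
  have W0 : Tendsto (fun x => x * p x ^ 2 + 1 * ((x ^ 2 + ν ^ 2) * p x ^ 2 - q x ^ 2))
      atTop (𝓝 0) := by
    have := (p0.mul p1).add (H0.const_mul 1)
    simp only [mul_zero, add_zero] at this
    refine this.congr fun y => ?_
    ring
  have u0 : Tendsto (fun x => (q x + (1 * x + 1 / 2) * p x) *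
      Real.exp (-1 * x - Real.log x / 2)) atTop (𝓝 0) := by
    have h1 : Tendsto (fun x => q x + (1 * x + 1 / 2) * p x) atTop (𝓝 0) := by
      have := q0.add (p0.add (p1.const_mul (1 / 2)))
      simp only [mul_zero, add_zero] at this
      refine this.congr fun y => ?_
      ring
    have h2 : Tendsto (fun x => Real.exp (-1 * x - Real.log x / 2)) atTop (𝓝 0) := by
      refine squeeze_zero' (Eventually.of_forall fun y => (Real.exp_pos _).le) ?_
        Real.tendsto_exp_neg_atTop_nhds_zero
      filter_upwards [eventually_ge_atTop (1 : ℝ)] with y hy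
      have := Real.log_nonneg hy
      apply Real.exp_le_exp.2
      linarith
    simpa using h1.mul h2
  have du := fun x (hx : 0 < x) => S.du 1 (by norm_num) hx
  have dW := fun x (hx : 0 < x) => S.dW 1 hx
  refine ⟨?_, ?_, ?_⟩
  · refine neg_of_top (smono (fun x hx => S.dH hx) (fun x hx => ?_)) H0 hx
    have := S.pos x hx
    positivity
  · intro hn
    have c : ∀ x, 0 < x → p x * (ν ^ 2 - 1 / 4) / x * Real.exp (-1 * x - Real.log x / 2) = 0 := by
      intro x hx
      rw [hn]; norm_num
    have hu : ∀ x, 0 < x → q x + (1 * x + 1 / 2) * p x = 0 := by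
      intro x hx
      have a := nonpos_of_top (mono du (fun x hx => (c x hx).ge)) u0 hx
      have b := nonpos_of_top (mono (fun x hx => (du x hx).neg)
        (fun x hx => by rw [c x hx]; simp)) (by have := u0.neg; rw [neg_zero] at this; exact this) hx
      have e := le_antisymm a (by simpa using b)
      exact (mul_eq_zero.1 e).resolve_right (Real.exp_pos _).ne'
    have a := nonpos_of_top (mono dW (fun x hx => by rw [hu x hx]; simp)) W0 hx
    have b := nonpos_of_top (mono (fun x hx => (dW x hx).neg)
        (fun x hx => by rw [hu x hx]; simp)) (by have := W0.neg; rw [neg_zero] at this; exact this) hx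
    simp only [Pi.neg_apply] at b
    linarith
  · intro hn
    have hu : ∀ x, 0 < x → q x + (1 * x + 1 / 2) * p x < 0 := by
      intro x hx
      have a := neg_of_top (smono du (fun x hx => by
        have := S.pos x hx
        have : 0 < ν ^ 2 - 1 / 4 := by nlinarith
        positivity)) u0 hx
      exact neg_of_mul_neg_left a (Real.exp_pos _).le
    have b := neg_of_top (smono (fun x hx => (dW x hx).neg)
        (fun x hx => by
          have := S.pos x hx
          have := hu x hx
          rw [neg_pos]
          apply mul_neg_of_pos_of_neg <;> linarith)) (by have := W0.neg; rw [neg_zero] at this; exact this) hx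
    simp only [Pi.neg_apply] at b
    linarith

end

/-! ### Second kind -/
open MeasureTheory

lemma cosh_le_exp_abs (μ t : ℝ) (ht : 0 ≤ t) : Real.cosh (μ * t) ≤ Real.exp (|μ| * t) := by
  rw [← Real.cosh_abs, abs_mul, abs_of_nonneg ht]
  have h : 0 ≤ |μ| * t := by positivity
  rw [Real.cosh_eq]
  have : Real.exp (-(|μ| * t)) ≤ Real.exp (|μ| * t) := Real.exp_le_exp.2 (by linarith)
  linarith

lemma sq_le_cosh (t : ℝ) (ht : 0 ≤ t) : t ^ 2 / 4 ≤ Real.cosh t := by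
  have h1 := Real.quadratic_le_exp_of_nonneg ht
  have h2 := Real.exp_pos (-t)
  rw [Real.cosh_eq]
  nlinarith

lemma bound_exp (μ : ℝ) {x t : ℝ} (hx : 0 < x) (ht : 4 * (|μ| + 1) / x ≤ t) :
    Real.exp (-x * Real.cosh t) * Real.cosh (μ * t) ≤ Real.exp (-1 * t) := by
  have h0 : 0 ≤ t := le_trans (by positivity) ht
  calc _ ≤ Real.exp (-x * Real.cosh t) * Real.exp (|μ| * t) := by
        gcongr
        exact cosh_le_exp_abs μ t h0
    _ = Real.exp (-x * Real.cosh t + |μ| * t) := (Real.exp_add _ _).symm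
    _ ≤ _ := by
        apply Real.exp_le_exp.2
        have h1 := mul_le_mul_of_nonneg_left (sq_le_cosh t h0) hx.le
        rw [div_le_iff₀ hx] at ht
        nlinarith

lemma Kint (μ : ℝ) {x : ℝ} (hx : 0 < x) :
    IntegrableOn (fun t => Real.exp (-x * Real.cosh t) * Real.cosh (μ * t)) (Ioi 0) := by
  apply integrable_of_isBigO_exp_neg (b := 1) one_pos
  · fun_prop
  · apply Asymptotics.IsBigO.of_bound 1
    filter_upwards [eventually_ge_atTop (4 * (|μ| + 1) / x)] with t ht
    rw [Real.norm_of_nonneg (by have := Real.cosh_pos (μ * t); positivity),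
      Real.norm_of_nonneg (by positivity), one_mul]
    exact bound_exp μ hx ht

lemma Kpos (μ : ℝ) {x : ℝ} (hx : 0 < x) : 0 < besselK μ x := by
  unfold besselK
  have hp : ∀ t, 0 < Real.exp (-x * Real.cosh t) * Real.cosh (μ * t) := fun t => by
    have := Real.cosh_pos (μ * t)
    positivity
  rw [setIntegral_pos_iff_support_of_nonneg_ae (Eventually.of_forall fun t => (hp t).le)
    (Kint μ hx)]
  have : Function.support (fun t => Real.exp (-x * Real.cosh t) * Real.cosh (μ * t)) = univ := by
    ext t
    simp only [Function.mem_support, mem_univ, iff_true]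
    exact (hp t).ne'
  rw [this]
  simp

lemma cosh_mul_cosh' (μ t : ℝ) : Real.cosh t * Real.cosh (μ * t) =
    (Real.cosh ((μ + 1) * t) + Real.cosh ((μ - 1) * t)) / 2 := by
  rw [add_mul, sub_mul, one_mul, Real.cosh_add, Real.cosh_sub]; ring

lemma sinh_mul_sinh' (μ t : ℝ) : Real.sinh t * Real.sinh (μ * t) =
    (Real.cosh ((μ + 1) * t) - Real.cosh ((μ - 1) * t)) / 2 := by
  rw [add_mul, sub_mul, one_mul, Real.cosh_add, Real.cosh_sub]; ring

lemma Kderiv (μ : ℝ) {x : ℝ} (hx : 0 < x) :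
    HasDerivAt (besselK μ) (-(besselK (μ + 1) x + besselK (μ - 1) x) / 2) x := by
  have hx2 : 0 < x / 2 := by linarith
  have key := hasDerivAt_integral_of_dominated_loc_of_deriv_le (μ := volume.restrict (Ioi (0 : ℝ)))
    (F := fun x t => Real.exp (-x * Real.cosh t) * Real.cosh (μ * t))
    (F' := fun x t => -(Real.exp (-x * Real.cosh t) * (Real.cosh t * Real.cosh (μ * t))))
    (x₀ := x) (s := Ioi (x / 2))
    (bound := fun t => (Real.exp (-(x / 2) * Real.cosh t) * Real.cosh ((μ + 1) * t) +
       Real.exp (-(x / 2) * Real.cosh t) * Real.cosh ((μ - 1) * t)) / 2)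
    (Ioi_mem_nhds (by linarith))
    (Eventually.of_forall fun y => (by fun_prop : Continuous _).aestronglyMeasurable)
    (Kint μ hx)
    ((by fun_prop : Continuous _).aestronglyMeasurable)
    (Eventually.of_forall fun t y hy => by
      have h1 := Real.cosh_pos (μ * t)
      have h2 := Real.cosh_pos t
      rw [norm_neg, Real.norm_of_nonneg (by positivity), ← mul_add, mul_div_assoc,
        ← cosh_mul_cosh']
      have : y > x / 2 := hy
      gcongr)
    (((Kint (μ + 1) hx2).add (Kint (μ - 1) hx2)).div_const 2)
    (Eventually.of_forall fun t y hy => by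
      have h := ((((hasDerivAt_id y).neg).mul_const (Real.cosh t)).exp).mul_const
        (Real.cosh (μ * t))
      refine h.congr_deriv ?_
      simp
      ring)
  refine key.2.congr_deriv ?_
  simp only [besselK]
  rw [← integral_add (Kint (μ + 1) hx) (Kint (μ - 1) hx), ← integral_neg, ← integral_div]
  congr 1
  ext t
  rw [cosh_mul_cosh']
  ring

lemma Krec (μ : ℝ) {x : ℝ} (hx : 0 < x) :
    besselK (μ + 1) x - besselK (μ - 1) x = 2 * μ / x * besselK μ x := by
  have hd : ∀ t : ℝ, HasDerivAt (fun t => Real.exp (-x * Real.cosh t) * Real.sinh (μ * t))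
      (μ * (Real.exp (-x * Real.cosh t) * Real.cosh (μ * t)) -
        x / 2 * (Real.exp (-x * Real.cosh t) * Real.cosh ((μ + 1) * t) -
        Real.exp (-x * Real.cosh t) * Real.cosh ((μ - 1) * t))) t := by
    intro t
    have h := (((Real.hasDerivAt_cosh t).const_mul (-x)).exp).mul
      (((hasDerivAt_id t).const_mul μ).sinh)
    refine h.congr_deriv ?_
    simp only [id]
    linear_combination (-x * Real.exp (-x * Real.cosh t)) * sinh_mul_sinh' μ t
  have hint := ((Kint μ hx).const_mul μ).sub
    (((Kint (μ + 1) hx).sub (Kint (μ - 1) hx)).const_mul (x / 2))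
  have hlim : Tendsto (fun t => Real.exp (-x * Real.cosh t) * Real.sinh (μ * t)) atTop (𝓝 0) := by
    have he : Tendsto (fun t : ℝ => Real.exp (-1 * t)) atTop (𝓝 0) := by
      simpa using Real.tendsto_exp_neg_atTop_nhds_zero
    refine squeeze_zero_norm' ?_ he
    filter_upwards [eventually_ge_atTop (4 * (|μ| + 1) / x)] with t ht
    refine le_trans ?_ (bound_exp μ hx ht)
    rw [norm_mul, Real.norm_of_nonneg (Real.exp_pos _).le]
    gcongr
    rw [Real.norm_eq_abs, Real.abs_sinh, ← Real.cosh_abs (μ * t)]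
    exact (Real.sinh_lt_cosh _).le
  have h := integral_Ioi_of_hasDerivAt_of_tendsto (a := (0 : ℝ)) (hd 0).continuousAt.continuousWithinAt
    (fun t _ => hd t) hint hlim
  have hi2 : Integrable (fun t => x / 2 * (Real.exp (-x * Real.cosh t) * Real.cosh ((μ + 1) * t) -
        Real.exp (-x * Real.cosh t) * Real.cosh ((μ - 1) * t))) (volume.restrict (Ioi 0)) :=
    ((Kint (μ + 1) hx).sub (Kint (μ - 1) hx)).const_mul (x / 2)
  rw [integral_sub ((Kint μ hx).const_mul μ) hi2,
    integral_const_mul, integral_const_mul, integral_sub (Kint (μ + 1) hx) (Kint (μ - 1) hx)] at h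
  simp only [mul_zero, Real.sinh_zero, sub_zero] at h
  change μ * besselK μ x - x / 2 * (besselK (μ + 1) x - besselK (μ - 1) x) = 0 at h
  field_simp
  linarith

lemma Klim (μ : ℝ) : Tendsto (fun x => x * besselK μ x) atTop (𝓝 0) := by
  have h1 : Tendsto (fun x : ℝ => x * Real.exp (-x)) atTop (𝓝 0) := by
    simpa using Real.tendsto_pow_mul_exp_neg_atTop_nhds_zero 1
  have h2 := h1.mul_const (Real.exp 1 * besselK μ 1)
  rw [zero_mul] at h2
  refine squeeze_zero' ?_ ?_ h2
  · filter_upwards [eventually_gt_atTop 0] with x hx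
    have := Kpos μ hx
    positivity
  · filter_upwards [eventually_ge_atTop 1] with x hx
    rw [mul_assoc, ← mul_assoc (Real.exp (-x)), ← Real.exp_add]
    gcongr
    unfold besselK
    rw [← integral_const_mul]
    apply integral_mono (Kint μ (by linarith)) ((Kint μ one_pos).const_mul _)
    intro t
    simp only
    rw [← mul_assoc, ← Real.exp_add]
    have := Real.cosh_pos (μ * t)
    gcongr
    nlinarith [Real.one_le_cosh t]

lemma Ksys (ν : ℝ) : Sys ν (besselK ν) (fun x => ν * besselK ν x - x * besselK (ν + 1) x) := by
  have d1 : ∀ x, 0 < x → HasDerivAt (besselK ν)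
      ((ν * besselK ν x - x * besselK (ν + 1) x) / x) x := by
    intro x hx
    refine (Kderiv ν hx).congr_deriv ?_
    have := Krec ν hx
    field_simp at this ⊢
    linarith
  refine ⟨d1, fun x hx => ?_, fun x hx => Kpos ν hx⟩
  have d2 : HasDerivAt (besselK (ν + 1)) (-besselK ν x - (ν + 1) / x * besselK (ν + 1) x) x := by
    refine (Kderiv (ν + 1) hx).congr_deriv ?_
    have := Krec (ν + 1) hx
    rw [add_sub_cancel_right] at this ⊢
    field_simp at this ⊢
    linarith
  refine (((d1 x hx).const_mul ν).sub ((hasDerivAt_id x).mul d2)).congr_deriv ?_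
  simp
  field_simp
  ring

/-! ### First kind -/

/-- coefficients of the entire part -/
noncomputable def cf (ν : ℝ) (k : ℕ) : ℝ := 1 / ((Nat.factorial k : ℝ) * Real.Gamma ((k : ℝ) + ν + 1))

/-- entire part -/
noncomputable def F (ν y : ℝ) : ℝ := ∑' k : ℕ, cf ν k * y ^ k

lemma Gpos {ν : ℝ} (hν : -(1 / 2) ≤ ν) (k : ℕ) : 0 < Real.Gamma ((k : ℝ) + ν + 1) := by
  apply Real.Gamma_pos_of_pos
  have : (0 : ℝ) ≤ k := Nat.cast_nonneg k
  linarith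

lemma cf_pos {ν : ℝ} (hν : -(1 / 2) ≤ ν) (k : ℕ) : 0 < cf ν k := by
  unfold cf
  have := Gpos hν k
  positivity

lemma Glow {ν : ℝ} (hν : -(1 / 2) ≤ ν) (k : ℕ) :
    Real.Gamma (ν + 1) ≤ 2 ^ k * Real.Gamma ((k : ℝ) + ν + 1) := by
  induction k with
  | zero => simp
  | succ k ih =>
    have hk : (0 : ℝ) ≤ k := Nat.cast_nonneg k
    have h : Real.Gamma (((k + 1 : ℕ) : ℝ) + ν + 1) =
        ((k : ℝ) + ν + 1) * Real.Gamma ((k : ℝ) + ν + 1) := by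
      rw [← Real.Gamma_add_one (by linarith)]
      push_cast
      ring_nf
    rw [h]
    refine ih.trans ?_
    have := Gpos hν k
    have h2 : 1 ≤ 2 * ((k : ℝ) + ν + 1) := by linarith
    calc 2 ^ k * Real.Gamma ((k : ℝ) + ν + 1) = 2 ^ k * (1 * Real.Gamma ((k : ℝ) + ν + 1)) := by ring
      _ ≤ 2 ^ k * (2 * ((k : ℝ) + ν + 1) * Real.Gamma ((k : ℝ) + ν + 1)) := by gcongr
      _ = _ := by ring

lemma summ_cf {ν : ℝ} (hν : -(1 / 2) ≤ ν) (y : ℝ) : Summable (fun k => cf ν k * y ^ k) := by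
  have h := (Real.summable_pow_div_factorial (2 * |y|)).mul_left (1 / Real.Gamma (ν + 1))
  refine Summable.of_norm_bounded h fun k => ?_
  have g0 : 0 < Real.Gamma (ν + 1) := Real.Gamma_pos_of_pos (by linarith)
  rw [norm_mul, norm_pow, Real.norm_eq_abs y, Real.norm_of_nonneg (cf_pos hν k).le]
  have h1 : cf ν k ≤ 1 / Real.Gamma (ν + 1) * (2 ^ k / (Nat.factorial k : ℝ)) := by
    unfold cf
    have := Gpos hν k
    have := Glow hν k
    have : (0 : ℝ) < Nat.factorial k := by positivity
    rw [div_mul_div_comm, div_le_div_iff₀ (by positivity) (by positivity)]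
    nlinarith
  calc _ ≤ 1 / Real.Gamma (ν + 1) * (2 ^ k / (Nat.factorial k : ℝ)) * |y| ^ k := by gcongr
    _ = _ := by rw [mul_pow]; ring

lemma cf_succ (ν : ℝ) (k : ℕ) : cf ν (k + 1) * ((k + 1 : ℕ) : ℝ) = cf (ν + 1) k := by
  unfold cf
  rw [Nat.factorial_succ]
  have : ((k + 1 : ℕ) : ℝ) + ν + 1 = (k : ℝ) + (ν + 1) + 1 := by push_cast; ring
  rw [this]
  push_cast
  have : ((k : ℝ) + 1) ≠ 0 := by positivity
  by_cases hG : Real.Gamma ((k : ℝ) + (ν + 1) + 1) = 0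
  · simp [hG]
  · field_simp

lemma F_pos {ν : ℝ} (hν : -(1 / 2) ≤ ν) {y : ℝ} (hy : 0 < y) : 0 < F ν y :=
  (summ_cf hν y).tsum_pos (fun k => by have := cf_pos hν k; positivity) 0
    (by have := cf_pos hν 0; positivity)

lemma F_deriv {ν : ℝ} (hν : -(1 / 2) ≤ ν) (y : ℝ) : HasDerivAt (F ν) (F (ν + 1) y) y := by
  have hR : |y| < |y| + 1 := by linarith
  have hu : Summable (fun k : ℕ => cf ν k * ((k : ℝ) * (|y| + 1) ^ (k - 1))) := by
    rw [← summable_nat_add_iff 1]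
    refine (summ_cf (ν := ν + 1) (by linarith) (|y| + 1)).congr fun k => ?_
    rw [← cf_succ]
    simp
    ring
  have key := hasDerivAt_tsum_of_isPreconnected (g := fun k y => cf ν k * y ^ k)
    (g' := fun k y => cf ν k * ((k : ℝ) * y ^ (k - 1))) (t := Metric.ball 0 (|y| + 1))
    (y₀ := y) (y := y) hu Metric.isOpen_ball (convex_ball _ _).isPreconnected
    (fun k z _ => (hasDerivAt_pow k z).const_mul _)
    (fun k z hz => by
      have hz' : |z| < |y| + 1 := by simpa using hz
      have := cf_pos hν k
      rw [norm_mul, norm_mul, norm_pow, Real.norm_of_nonneg this.le, Real.norm_eq_abs z,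
        Real.norm_of_nonneg (Nat.cast_nonneg k)]
      gcongr)
    (by simp) (summ_cf hν y) (by simp)
  refine key.congr_deriv ?_
  have hs : Summable (fun k : ℕ => cf ν k * ((k : ℝ) * y ^ (k - 1))) := by
    rw [← summable_nat_add_iff 1]
    refine (summ_cf (ν := ν + 1) (by linarith) y).congr fun k => ?_
    rw [← cf_succ]
    simp
    ring
  rw [hs.tsum_eq_zero_add]
  simp only [Nat.cast_zero, zero_mul, mul_zero, zero_add, F]
  refine tsum_congr fun k => ?_
  rw [← cf_succ]
  simp
  ring

lemma F_rec {ν : ℝ} (hν : 1 / 2 ≤ ν) (y : ℝ) : F (ν - 1) y = ν * F ν y + y * F (ν + 1) y := by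
  have s1 := (summ_cf (ν := ν) (by linarith) y)
  have s2 := (summ_cf (ν := ν + 1) (by linarith) y)
  have hs : HasSum (fun k : ℕ => cf ν k * ((k : ℝ) * y ^ k)) (y * F (ν + 1) y) := by
    rw [← hasSum_nat_add_iff' 1]
    simp only [Finset.range_one, Finset.sum_singleton, Nat.cast_zero, zero_mul, mul_zero, sub_zero]
    refine (s2.hasSum.mul_left y).congr_fun ?_
    intro k
    rw [← cf_succ]
    ring
  have := (s1.hasSum.mul_left ν).add hs
  rw [F]
  refine HasSum.tsum_eq (this.congr_fun ?_)
  intro k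
  have hk : (0 : ℝ) ≤ k := Nat.cast_nonneg k
  have : cf (ν - 1) k = (k + ν) * cf ν k := by
    unfold cf
    rw [Real.Gamma_add_one (s := k + ν) (by linarith)]
    have e : (k : ℝ) + (ν - 1) + 1 = k + ν := by ring
    rw [e]
    have : Real.Gamma (k + ν) ≠ 0 := (Real.Gamma_pos_of_pos (by linarith)).ne'
    have : (k : ℝ) + ν ≠ 0 := by linarith
    field_simp
  rw [this]
  ring

lemma I_eq (ν : ℝ) {x : ℝ} (hx : 0 < x) : besselI ν x = (x / 2) ^ ν * F ν ((x / 2) ^ 2) := by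
  have h2 : 0 < x / 2 := by linarith
  unfold besselI F
  rw [← tsum_mul_left]
  refine tsum_congr fun k => ?_
  rw [Real.rpow_add h2, Real.rpow_mul h2.le, Real.rpow_natCast, cf]
  norm_num
  ring

lemma I_pos {ν : ℝ} (hν : -(1 / 2) ≤ ν) {x : ℝ} (hx : 0 < x) : 0 < besselI ν x := by
  rw [I_eq ν hx]
  have := F_pos hν (show 0 < (x / 2) ^ 2 by positivity)
  positivity

lemma I_deriv {ν : ℝ} (hν : -(1 / 2) ≤ ν) {x : ℝ} (hx : 0 < x) :
    HasDerivAt (besselI ν) (ν / x * besselI ν x + besselI (ν + 1) x) x := by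
  have h2 : 0 < x / 2 := by linarith
  have hd : HasDerivAt (fun x : ℝ => x / 2) (1 / 2) x := (hasDerivAt_id x).div_const 2
  have h := (hd.rpow_const (p := ν) (Or.inl h2.ne')).mul ((F_deriv hν ((x / 2) ^ 2)).comp x (hd.pow 2))
  refine (h.congr_deriv ?_).congr_of_eventuallyEq ?_
  · rw [I_eq ν hx, I_eq (ν + 1) hx, Real.rpow_sub_one h2.ne', Real.rpow_add_one h2.ne']
    simp only [Function.comp]
    field_simp
    norm_num
    ring
  · filter_upwards [Ioi_mem_nhds hx] with y hy
    rw [I_eq ν hy]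
    rfl

lemma I_rec {ν : ℝ} (hν : 1 / 2 ≤ ν) {x : ℝ} (hx : 0 < x) :
    besselI (ν - 1) x = 2 * ν / x * besselI ν x + besselI (ν + 1) x := by
  have h2 : 0 < x / 2 := by linarith
  rw [I_eq _ hx, I_eq _ hx, I_eq _ hx, F_rec hν, Real.rpow_sub_one h2.ne',
    Real.rpow_add_one h2.ne']
  field_simp

lemma Isys {ν : ℝ} (hν : 1 / 2 ≤ ν) :
    Sys ν (besselI ν) (fun x => x * besselI (ν - 1) x - ν * besselI ν x) := by
  have d1 : ∀ x, 0 < x → HasDerivAt (besselI ν)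
      ((x * besselI (ν - 1) x - ν * besselI ν x) / x) x := by
    intro x hx
    refine (I_deriv (by linarith) hx).congr_deriv ?_
    rw [I_rec hν hx]
    field_simp
    ring
  refine ⟨d1, fun x hx => ?_, fun x hx => I_pos (by linarith) hx⟩
  have d2 := I_deriv (ν := ν - 1) (by linarith) hx
  rw [sub_add_cancel] at d2
  refine (((hasDerivAt_id x).mul d2).sub ((d1 x hx).const_mul ν)).congr_deriv ?_
  simp
  field_simp
  ring

lemma Iq_pos {ν : ℝ} (hν : 1 / 2 ≤ ν) {x : ℝ} (hx : 0 < x) :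
    0 < x * besselI (ν - 1) x - ν * besselI ν x := by
  have h1 := I_pos (ν := ν) (by linarith) hx
  have h2 := I_pos (ν := ν + 1) (by linarith) hx
  have : x * besselI (ν - 1) x - ν * besselI ν x = ν * besselI ν x + x * besselI (ν + 1) x := by
    rw [I_rec hν hx]
    field_simp
    ring
  rw [this]
  positivity

lemma I_zero {ν : ℝ} (hν : 0 < ν) : Tendsto (besselI ν) (𝓝[>] 0) (𝓝 0) := by
  have hd : Tendsto (fun x : ℝ => x / 2) (𝓝[>] 0) (𝓝 0) := by
    have : Tendsto (fun x : ℝ => x / 2) (𝓝 0) (𝓝 (0 / 2)) := tendsto_id.div_const 2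
    rw [zero_div] at this
    exact this.mono_left nhdsWithin_le_nhds
  have h1 : Tendsto (fun x : ℝ => (x / 2) ^ ν) (𝓝[>] 0) (𝓝 0) := by
    have := hd.rpow_const (p := ν) (Or.inr hν.le)
    rwa [Real.zero_rpow hν.ne'] at this
  have h2 : Tendsto (fun x : ℝ => F ν ((x / 2) ^ 2)) (𝓝[>] 0) (𝓝 (F ν (0 ^ 2))) :=
    (F_deriv (ν := ν) (by linarith) (0 ^ 2)).continuousAt.tendsto.comp (hd.pow 2)
  have := h1.mul h2
  rw [zero_mul] at this
  refine this.congr' ?_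
  filter_upwards [self_mem_nhdsWithin] with x hx
  rw [I_eq ν hx]

lemma Iq_zero {ν : ℝ} (hν : 1 / 2 ≤ ν) :
    Tendsto (fun x => x * besselI (ν - 1) x - ν * besselI ν x) (𝓝[>] 0) (𝓝 0) := by
  have i0 : Tendsto (fun x : ℝ => x) (𝓝[>] 0) (𝓝 0) := tendsto_id.mono_left nhdsWithin_le_nhds
  have := ((I_zero (ν := ν) (by linarith)).const_mul ν).add
    (i0.mul (I_zero (ν := ν + 1) (by linarith)))
  simp only [mul_zero, add_zero] at this
  refine this.congr' ?_
  filter_upwards [self_mem_nhdsWithin] with x hx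
  have hx' : (0 : ℝ) < x := hx
  rw [I_rec hν hx']
  field_simp
  ring

end BesselAux

theorem phi_bounds_13 (ν : ℝ) (hν : 1 / 2 ≤ ν) (x : ℝ) (hx : 0 < x) :
    (0 < deriv (phiI ν) x ∧ deriv (phiI ν) x < 1) ∧
    (0 < deriv (phiK ν) x ∧ deriv (phiK ν) x ≤ 1) ∧
    (ν + Real.sqrt (ν ^ 2 + x * (x - 1)) < phiI ν x ∧
      phiI ν x < ν + Real.sqrt (ν ^ 2 + x * (x + 1))) ∧
    (ν + Real.sqrt (ν ^ 2 + x * (x - 1)) < phiK ν x ∧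
      phiK ν x ≤ ν + Real.sqrt (ν ^ 2 + x * (x + 1))) ∧
    ((deriv (phiK ν) x = 1 ∨ phiK ν x = ν + Real.sqrt (ν ^ 2 + x * (x + 1))) ↔
      ν = 1 / 2) := by
  have hI : ∀ y, 0 < y → phiI ν y =
      ν + 1 * ((y * besselI (ν - 1) y - ν * besselI ν y) / besselI ν y) := by
    intro y hy
    have := (BesselAux.I_pos (ν := ν) (by linarith) hy).ne'
    unfold phiI
    field_simp
    ring
  have hK : ∀ y, 0 < y → phiK ν y =
      ν + (-1) * ((ν * besselK ν y - y * besselK (ν + 1) y) / besselK ν y) := by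
    intro y hy
    have := (BesselAux.Kpos ν hy).ne'
    unfold phiK
    field_simp
    ring
  have dI : deriv (phiI ν) x = _ :=
    (((BesselAux.Isys hν).dphi 1 hx).congr_of_eventuallyEq
      (by filter_upwards [Ioi_mem_nhds hx] with y hy; exact hI y hy)).deriv
  have dK : deriv (phiK ν) x = _ :=
    (((BesselAux.Ksys ν).dphi (-1) hx).congr_of_eventuallyEq
      (by filter_upwards [Ioi_mem_nhds hx] with y hy; exact hK y hy)).deriv
  have bI := (BesselAux.Isys hν).first hν (fun y hy => BesselAux.Iq_pos hν hy)
    (BesselAux.I_zero (by linarith)) (BesselAux.Iq_zero hν) hx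
  have hq0 : Tendsto (fun x => ν * besselK ν x - x * besselK (ν + 1) x) atTop (𝓝 0) := by
    have h0 := tendsto_inv_atTop_zero.mul (BesselAux.Klim ν)
    have := (h0.const_mul ν).sub (BesselAux.Klim (ν + 1))
    simp only [mul_zero, sub_zero] at this
    refine this.congr' ?_
    filter_upwards [eventually_gt_atTop (0 : ℝ)] with y hy
    field_simp
  have bK := (BesselAux.Ksys ν).second hν (BesselAux.Klim ν) hq0 hx
  have pI := BesselAux.I_pos (ν := ν) (by linarith) hx
  have pK := BesselAux.Kpos ν hx
  have qI := BesselAux.Iq_pos hν hx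
  have eI := hI x hx
  have eK := hK x hx
  beta_reduce at bI bK dI dK
  have qK : ν * besselK ν x - x * besselK (ν + 1) x < 0 := by
    have h1 := BesselAux.Krec ν hx
    have h2 := BesselAux.Kpos (ν - 1) hx
    have : ν * besselK ν x - x * besselK (ν + 1) x =
        -(ν * besselK ν x + x * besselK (ν - 1) x) := by
      field_simp at h1
      linarith
    rw [this, neg_lt_zero]
    positivity
  generalize x * besselI (ν - 1) x - ν * besselI ν x = q at *
  generalize ν * besselK ν x - x * besselK (ν + 1) x = r at *
  generalize besselI ν x = p at *
  generalize besselK ν x = k at *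
  rw [dI, dK, eI, eK]
  have hnn : 0 ≤ ν ^ 2 + x * (x - 1) := by nlinarith [sq_nonneg (x - 1 / 2)]
  have xp : 0 < x * p ^ 2 := by positivity
  have xk : 0 < x * k ^ 2 := by positivity
  have k2 : 0 < k ^ 2 := by positivity
  have p2 : 0 < p ^ 2 := by positivity
  have rk : 0 < -1 * (r / k) := by
    rw [neg_one_mul, ← neg_div]; exact div_pos (by linarith) pK
  have qp : 0 < 1 * (q / p) := by rw [one_mul]; positivity
  have sI : (1 * (q / p)) ^ 2 * p ^ 2 = q ^ 2 := by field_simp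
  have sK : (-1 * (r / k)) ^ 2 * k ^ 2 = r ^ 2 := by field_simp
  have hkle : 0 ≤ x * k ^ 2 + ((x ^ 2 + ν ^ 2) * k ^ 2 - r ^ 2) := by
    rcases hν.eq_or_lt with h | h
    · exact (bK.2.1 h.symm).ge
    · exact (bK.2.2 h).le
  have f1 : -1 * (((x ^ 2 + ν ^ 2) * k ^ 2 - r ^ 2) / (x * k ^ 2)) =
      (r ^ 2 - (x ^ 2 + ν ^ 2) * k ^ 2) / (x * k ^ 2) := by ring
  have hdeq : -1 * (((x ^ 2 + ν ^ 2) * k ^ 2 - r ^ 2) / (x * k ^ 2)) = 1 ↔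
      x * k ^ 2 + ((x ^ 2 + ν ^ 2) * k ^ 2 - r ^ 2) = 0 := by
    rw [f1, div_eq_one_iff_eq xk.ne']
    constructor <;> intro h <;> linarith
  have hsq : ν + -1 * (r / k) = ν + √(ν ^ 2 + x * (x + 1)) ↔
      x * k ^ 2 + ((x ^ 2 + ν ^ 2) * k ^ 2 - r ^ 2) = 0 := by
    rw [add_right_inj, eq_comm, Real.sqrt_eq_iff_eq_sq (by positivity) rk.le, ← sK]
    constructor
    · intro h
      rw [← h]; ring
    · intro h
      apply mul_right_cancel₀ k2.ne'
      linarith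
  have hiff : x * k ^ 2 + ((x ^ 2 + ν ^ 2) * k ^ 2 - r ^ 2) = 0 ↔ ν = 1 / 2 := by
    refine ⟨fun h => ?_, bK.2.1⟩
    rcases hν.eq_or_lt with h' | h'
    · exact h'.symm
    · exact absurd h (bK.2.2 h').ne'
  refine ⟨⟨?_, ?_⟩, ⟨?_, ?_⟩, ⟨?_, ?_⟩, ⟨?_, ?_⟩, ?_⟩
  · rw [one_mul]; exact div_pos bI.1 xp
  · rw [one_mul, div_lt_one xp]; exact bI.2
  · rw [f1]; exact div_pos (by linarith) xk
  · rw [f1, div_le_one xk]; linarith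
  · rw [add_lt_add_iff_left, Real.sqrt_lt' qp, ← mul_lt_mul_iff_left₀ p2, sI]
    nlinarith
  · rw [add_lt_add_iff_left]
    apply Real.lt_sqrt_of_sq_lt
    rw [← mul_lt_mul_iff_left₀ p2, sI]
    nlinarith
  · rw [add_lt_add_iff_left, Real.sqrt_lt' rk, ← mul_lt_mul_iff_left₀ k2, sK]
    nlinarith
  · rw [add_le_add_iff_left]
    apply Real.le_sqrt_of_sq_le
    rw [← mul_le_mul_iff_left₀ k2, sK]
    nlinarith
  · rw [hdeq, hsq, or_self, hiff]
end

section
/- Fix ν and λ with λ ∈ (0, 1/2) and ν ≥ 1/2 − λ, and let h(x) = I_{ν−1}(x)/I_ν(x). There exists a unique B > 0 such that the function L(x) = (ν − 1/2 − λ + √(B + x²))/x satisfies h(x) ≥ L(x) for all x > 0 with equality for at least one x > 0; moreover the equality holds at exactly one point x* > 0, and at this point h′(x*) = L′(x*). Writing B = B(λ) and x* = x*(λ) for this fixed ν, the function B(λ) is increasing and x*(λ) is decreasing on (0, 1/2), and lim_{λ→0⁺} B(λ) = ν² − 1/4, lim_{λ→1/2⁻} B(λ) = (ν + 1)², lim_{λ→0⁺}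 x*(λ) = +∞, lim_{λ→1/2⁻} x*(λ) = 0. -/
open Set Filter

/-- The ratio `h(x) = I_{ν-1}(x)/I_ν(x)`. -/
noncomputable def ratioI (ν : ℝ) : ℝ → ℝ := fun x => besselI (ν - 1) x / besselI ν x

/-- The candidate lower bound `L(x) = (ν - 1/2 - λ + √(B + x²))/x`. -/
noncomputable def lowI (ν lam B : ℝ) : ℝ → ℝ := fun x =>
  (ν - 1 / 2 - lam + Real.sqrt (B + x ^ 2)) / x

/-- `B > 0`, `L` is a lower bound for `h` on `(0,∞)`, and the bound is attained somewhere. -/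
def TouchesBelowI (ν lam B : ℝ) : Prop :=
  0 < B ∧ (∀ x > 0, lowI ν lam B x ≤ ratioI ν x) ∧ ∃ x > 0, ratioI ν x = lowI ν lam B x

/-- The touching point `x*` is unique and the graphs are tangent there. -/
def TangentBelowI (ν lam B xs : ℝ) : Prop :=
  0 < xs ∧ ratioI ν xs = lowI ν lam B xs ∧
    (∀ x > 0, ratioI ν x = lowI ν lam B x → x = xs) ∧
    deriv (ratioI ν) xs = deriv (lowI ν lam B) xs

noncomputable def cg (μ : ℝ) (k : ℕ) : ℝ := 1 / ((Nat.factorial k : ℝ) * Real.Gamma ((k : ℝ) + μ + 1))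

noncomputable def gg (μ t : ℝ) : ℝ := ∑' k : ℕ, cg μ k * t ^ k

lemma cg_pos {μ : ℝ} (h : -1 < μ) (k : ℕ) : 0 < cg μ k := by
  unfold cg
  have h1 : 0 < Real.Gamma ((k : ℝ) + μ + 1) := Real.Gamma_pos_of_pos (by
    have : (0 : ℝ) ≤ k := Nat.cast_nonneg k
    linarith)
  positivity

lemma cg_succ {μ : ℝ} (h : -1 < μ) (k : ℕ) :
    ((k : ℝ) + 1) * cg μ (k + 1) = cg (μ + 1) k := by
  have h0 : (0 : ℝ) ≤ k := Nat.cast_nonneg k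
  have h1 : 0 < Real.Gamma ((k : ℝ) + (μ + 1) + 1) := Real.Gamma_pos_of_pos (by linarith)
  unfold cg
  rw [Nat.factorial_succ]
  push_cast
  rw [show (k : ℝ) + 1 + μ + 1 = (k : ℝ) + (μ + 1) + 1 by ring]
  have : (Nat.factorial k : ℝ) ≠ 0 := by positivity
  field_simp

lemma cg_shift {μ : ℝ} (h : -1 < μ) (k : ℕ) :
    cg μ k = ((k : ℝ) + μ + 1) * cg (μ + 1) k := by
  have h0 : (0 : ℝ) ≤ k := Nat.cast_nonneg k
  have h2 : 0 < (k : ℝ) + μ + 1 := by linarith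
  have h1 : 0 < Real.Gamma ((k : ℝ) + μ + 1) := Real.Gamma_pos_of_pos h2
  unfold cg
  rw [show (k : ℝ) + (μ + 1) + 1 = ((k : ℝ) + μ + 1) + 1 by ring, Real.Gamma_add_one h2.ne']
  have : (Nat.factorial k : ℝ) ≠ 0 := by positivity
  field_simp

lemma cg_summable {μ : ℝ} (h : -1 < μ) (t : ℝ) : Summable (fun k : ℕ => cg μ k * t ^ k) := by
  by_cases ht : t = 0
  · apply summable_of_ne_finset_zero (s := {0})
    intro b hb
    have : b ≠ 0 := by simpa using hb
    simp [ht, this]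
  apply summable_of_ratio_test_tendsto_lt_one (l := 0) one_pos
  · exact Filter.Eventually.of_forall fun k => mul_ne_zero (cg_pos h k).ne' (pow_ne_zero _ ht)
  · have key : ∀ k : ℕ, ‖cg μ (k + 1) * t ^ (k + 1)‖ / ‖cg μ k * t ^ k‖
        = |t| * ((((k : ℝ) + 1))⁻¹ * ((k : ℝ) + μ + 1)⁻¹) := by
      intro k
      have h0 : (0 : ℝ) ≤ k := Nat.cast_nonneg k
      have h2 : 0 < (k : ℝ) + μ + 1 := by linarith
      have e1 := cg_succ h k
      have e2 := cg_shift h k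
      have p1 := cg_pos h k
      have p2 := cg_pos h (k + 1)
      have p3 := cg_pos (μ := μ + 1) (by linarith) k
      rw [norm_mul, norm_mul, norm_pow, norm_pow, Real.norm_of_nonneg p1.le,
        Real.norm_of_nonneg p2.le, Real.norm_eq_abs]
      have : |t| ≠ 0 := abs_ne_zero.mpr ht
      rw [e2, ← e1]
      field_simp
      ring
    simp_rw [key]
    have l1 : Tendsto (fun k : ℕ => (((k : ℝ) + 1))⁻¹) atTop (nhds 0) := by
      apply Tendsto.inv_tendsto_atTop
      exact tendsto_atTop_add_const_right _ _ tendsto_natCast_atTop_atTop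
    have l2 : Tendsto (fun k : ℕ => (((k : ℝ) + μ + 1))⁻¹) atTop (nhds 0) := by
      apply Tendsto.inv_tendsto_atTop
      exact tendsto_atTop_add_const_right _ _
        (tendsto_atTop_add_const_right _ _ tendsto_natCast_atTop_atTop)
    simpa using (l1.mul l2).const_mul |t|

lemma gg_pos {μ : ℝ} (h : -1 < μ) {t : ℝ} (ht : 0 ≤ t) : 0 < gg μ t := by
  unfold gg
  have := (cg_summable h t).tsum_pos (fun k => mul_nonneg (cg_pos h k).le (pow_nonneg ht k)) 0
    (by simpa using cg_pos h 0)
  exact this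

lemma gg_zero (μ : ℝ) : gg μ 0 = cg μ 0 := by
  unfold gg
  rw [tsum_eq_single 0]
  · simp
  · intro b hb; simp [hb]

lemma gg_hasDeriv {μ : ℝ} (h : -1 < μ) (t : ℝ) : HasDerivAt (gg μ) (gg (μ + 1) t) t := by
  have h' : -1 < μ + 1 := by linarith
  set M : ℝ := |t| + 1 with hM
  have hs : Summable (fun k : ℕ => (k : ℝ) * cg μ k * M ^ (k - 1)) := by
    rw [← summable_nat_add_iff 1]
    refine (cg_summable h' M).congr fun k => ?_
    rw [← cg_succ h k]; push_cast; simp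
  have key := hasDerivAt_tsum_of_isPreconnected (𝕜 := ℝ) (F := ℝ)
    (g := fun k t => cg μ k * t ^ k) (g' := fun k t => (k : ℝ) * cg μ k * t ^ (k - 1))
    (t := Metric.ball (0 : ℝ) M) (y₀ := 0) (y := t) hs
    Metric.isOpen_ball (convex_ball (0 : ℝ) M).isPreconnected
    (fun n y _ => by
      have := (hasDerivAt_pow n y).const_mul (cg μ n)
      exact this.congr_deriv (by ring))
    (fun n y hy => by
      have hy' : |y| ≤ M := by
        have := Metric.mem_ball.mp hy
        rw [Real.dist_eq, sub_zero] at this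
        exact this.le
      rw [norm_mul, norm_pow, Real.norm_eq_abs y, Real.norm_of_nonneg
        (mul_nonneg (Nat.cast_nonneg n) (cg_pos h n).le)]
      have := (cg_pos h n).le
      gcongr)
    (Metric.mem_ball_self (by positivity)) (cg_summable h 0)
    (by rw [Metric.mem_ball, Real.dist_eq, sub_zero, hM]; linarith)
  refine HasDerivAt.congr_deriv (f := gg μ) key ?_
  unfold gg
  have hs2 : Summable (fun k : ℕ => (k : ℝ) * cg μ k * t ^ (k - 1)) := by
    rw [← summable_nat_add_iff 1]
    refine (cg_summable h' t).congr fun k => ?_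
    rw [← cg_succ h k]; push_cast; simp
  rw [hs2.tsum_eq_zero_add]
  simp only [Nat.cast_zero, zero_mul, zero_add]
  refine tsum_congr fun k => ?_
  rw [← cg_succ h k]; push_cast; simp

lemma gg_rec {μ : ℝ} (h : -1 < μ) (t : ℝ) :
    gg μ t = (μ + 1) * gg (μ + 1) t + t * gg (μ + 2) t := by
  have h' : -1 < μ + 1 := by linarith
  have h'' : -1 < μ + 2 := by linarith
  have hs1 := (cg_summable h' t).mul_left (μ + 1)
  have hs2 : Summable (fun k : ℕ => (k : ℝ) * cg (μ + 1) k * t ^ k) := by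
    rw [← summable_nat_add_iff 1]
    refine ((cg_summable h'' t).mul_left t).congr fun k => ?_
    have := cg_succ h' k
    rw [show μ + 1 + 1 = μ + 2 by ring] at this
    rw [← this]; push_cast; ring
  have e2 : t * gg (μ + 2) t = ∑' k : ℕ, (k : ℝ) * cg (μ + 1) k * t ^ k := by
    rw [hs2.tsum_eq_zero_add]
    simp only [Nat.cast_zero, zero_mul, zero_add]
    unfold gg
    rw [← tsum_mul_left]
    refine tsum_congr fun k => ?_
    have := cg_succ h' k
    rw [show μ + 1 + 1 = μ + 2 by ring] at this
    rw [← this]; push_cast; ring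
  rw [e2]
  unfold gg
  rw [← tsum_mul_left, ← hs1.tsum_add hs2]
  refine tsum_congr fun k => ?_
  rw [cg_shift h k]; ring

lemma besselI_eq {μ : ℝ} {x : ℝ} (hx : 0 < x) :
    besselI μ x = (x / 2) ^ μ * gg μ (x ^ 2 / 4) := by
  unfold besselI gg
  rw [← tsum_mul_left]
  refine tsum_congr fun k => ?_
  have hx2 : 0 < x / 2 := by positivity
  rw [Real.rpow_add hx2, show (2 * (k : ℝ)) = ((2 * k : ℕ) : ℝ) by push_cast; ring,
    Real.rpow_natCast, pow_mul, show (x / 2) ^ 2 = x ^ 2 / 4 by ring]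
  unfold cg
  ring

/-- The logarithmic derivative of the Bessel function, times x. -/
noncomputable def vv (ν x : ℝ) : ℝ :=
  ν + x ^ 2 / 2 * (gg (ν + 1) (x ^ 2 / 4) / gg ν (x ^ 2 / 4))

noncomputable def JJ (ν x : ℝ) : ℝ := x ^ ν * gg ν (x ^ 2 / 4)

lemma ratioI_eq {ν : ℝ} (hν : 0 < ν) {x : ℝ} (hx : 0 < x) :
    ratioI ν x = (vv ν x + ν) / x := by
  unfold ratioI vv
  rw [besselI_eq hx, besselI_eq hx]
  have hx2 : 0 < x / 2 := by positivity
  have hg : 0 < gg ν (x ^ 2 / 4) := gg_pos (by linarith) (by positivity)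
  have hr := gg_rec (μ := ν - 1) (by linarith) (x ^ 2 / 4)
  rw [show ν - 1 + 1 = ν by ring, show ν - 1 + 2 = ν + 1 by ring] at hr
  rw [hr, Real.rpow_sub_one hx2.ne']
  have : 0 < (x / 2) ^ ν := Real.rpow_pos_of_pos hx2 _
  field_simp
  ring

structure BData (ν : ℝ) (v J : ℝ → ℝ) : Prop where
  hν : 0 < ν
  hv : ∀ x > 0, HasDerivAt v ((x ^ 2 + ν ^ 2 - v x ^ 2) / x) x
  hJ : ∀ x > 0, HasDerivAt J (v x * J x / x) x
  Jpos : ∀ x > 0, 0 < J x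
  vgt : ∀ x > 0, ν < v x
  vlim : Tendsto v (nhdsWithin 0 (Ioi 0)) (nhds ν)
  Dlim : Tendsto (fun x => (x ^ 2 + ν ^ 2 - v x ^ 2) / x ^ 2) (nhdsWithin 0 (Ioi 0))
    (nhds (1 / (ν + 1)))
  Jlim : Tendsto J (nhdsWithin 0 (Ioi 0)) (nhds 0)

lemma bdata {ν : ℝ} (hν : 0 < ν) : BData ν (vv ν) (JJ ν) := by
  have hn : -1 < ν := by linarith
  have hn1 : -1 < ν + 1 := by linarith
  have hq : ∀ x : ℝ, HasDerivAt (fun x : ℝ => x ^ 2 / 4) (x / 2) x := fun x => by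
    have := (hasDerivAt_pow 2 x).div_const 4
    exact this.congr_deriv (by push_cast; ring)
  have hg0 : ∀ x : ℝ, 0 < gg ν (x ^ 2 / 4) := fun x => gg_pos hn (by positivity)
  have hg1 : ∀ x : ℝ, 0 < gg (ν + 1) (x ^ 2 / 4) := fun x => gg_pos hn1 (by positivity)
  have hd0 : ∀ x : ℝ, HasDerivAt (fun x : ℝ => gg ν (x ^ 2 / 4))
      (gg (ν + 1) (x ^ 2 / 4) * (x / 2)) x := fun x =>
    HasDerivAt.comp (h₂ := gg ν) x (gg_hasDeriv hn (x ^ 2 / 4)) (hq x)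
  have hd1 : ∀ x : ℝ, HasDerivAt (fun x : ℝ => gg (ν + 1) (x ^ 2 / 4))
      (gg (ν + 1 + 1) (x ^ 2 / 4) * (x / 2)) x := fun x =>
    HasDerivAt.comp (h₂ := gg (ν + 1)) x (gg_hasDeriv hn1 (x ^ 2 / 4)) (hq x)
  have hrho : ContinuousAt (fun x : ℝ => gg (ν + 1) (x ^ 2 / 4) / gg ν (x ^ 2 / 4)) 0 :=
    (hd1 0).continuousAt.div (hd0 0).continuousAt (hg0 0).ne'
  have hrho0 : gg (ν + 1) ((0 : ℝ) ^ 2 / 4) / gg ν ((0 : ℝ) ^ 2 / 4) = 1 / (ν + 1) := by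
    norm_num [gg_zero]
    rw [cg_shift hn 0]
    have := cg_pos hn1 0
    simp only [Nat.cast_zero, zero_add]
    have : 0 < ν + 1 := by linarith
    field_simp
  have hJc : ContinuousAt (JJ ν) 0 := by
    unfold JJ
    exact (Real.continuousAt_rpow_const 0 ν (Or.inr hν.le)).mul (hd0 0).continuousAt
  have hvc : ContinuousAt (vv ν) 0 := by
    unfold vv
    exact continuousAt_const.add ((by fun_prop : ContinuousAt (fun x : ℝ => x ^ 2 / 2) 0).mul hrho)
  refine ⟨hν, ?_, ?_, ?_, ?_, ?_, ?_, ?_⟩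
  · intro x hx
    have h1 := (((hasDerivAt_pow 2 x).div_const 2).mul
      ((hd1 x).div (hd0 x) (hg0 x).ne')).const_add ν
    have hr := gg_rec hn (x ^ 2 / 4)
    rw [show ν + 2 = ν + 1 + 1 by ring] at hr
    refine HasDerivAt.congr_deriv (f := vv ν) h1 ?_
    unfold vv
    simp only [Pi.div_apply]
    have a0 := hg0 x
    generalize hA : gg ν (x ^ 2 / 4) = A at *
    generalize hB : gg (ν + 1) (x ^ 2 / 4) = B' at *
    generalize hC : gg (ν + 1 + 1) (x ^ 2 / 4) = C at *
    have hC' : C = (A - (ν + 1) * B') * 4 / x ^ 2 := by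
      rw [hr]; field_simp; ring
    rw [hC']
    simp only [Nat.cast_ofNat]
    field_simp
    ring
  · intro x hx
    have h1 := (Real.hasDerivAt_rpow_const (p := ν) (Or.inl hx.ne')).mul (hd0 x)
    refine HasDerivAt.congr_deriv (f := JJ ν) h1 ?_
    unfold JJ vv
    rw [Real.rpow_sub_one hx.ne']
    have a0 := hg0 x
    field_simp
  · intro x hx
    exact mul_pos (Real.rpow_pos_of_pos hx _) (hg0 x)
  · intro x hx
    unfold vv
    have := div_pos (hg1 x) (hg0 x)
    have : 0 < x ^ 2 / 2 * (gg (ν + 1) (x ^ 2 / 4) / gg ν (x ^ 2 / 4)) := by positivity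
    linarith
  · have := hvc.tendsto.mono_left (nhdsWithin_le_nhds (s := Ioi 0))
    simpa [vv] using this
  · have h2 : ContinuousAt (fun x : ℝ => 1 - (gg (ν + 1) (x ^ 2 / 4) / gg ν (x ^ 2 / 4)) *
      (ν + x ^ 2 / 4 * (gg (ν + 1) (x ^ 2 / 4) / gg ν (x ^ 2 / 4)))) 0 :=
      continuousAt_const.sub (hrho.mul (continuousAt_const.add
        ((by fun_prop : ContinuousAt (fun x : ℝ => x ^ 2 / 4) 0).mul hrho)))
    have h3 := h2.tendsto.mono_left (nhdsWithin_le_nhds (s := Ioi 0))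
    rw [hrho0] at h3
    have e : 1 - 1 / (ν + 1) * (ν + (0 : ℝ) ^ 2 / 4 * (1 / (ν + 1))) = 1 / (ν + 1) := by
      have : 0 < ν + 1 := by linarith
      field_simp
      ring
    rw [e] at h3
    refine h3.congr' ?_
    filter_upwards [self_mem_nhdsWithin] with x hx
    have hx : 0 < x := hx
    unfold vv
    generalize gg (ν + 1) (x ^ 2 / 4) / gg ν (x ^ 2 / 4) = ρ
    field_simp
    ring
  · have := hJc.tendsto.mono_left (nhdsWithin_le_nhds (s := Ioi 0))
    simpa [JJ, Real.zero_rpow hν.ne'] using this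

/-- barrier lemma -/
lemma barrier {f f' : ℝ → ℝ} {y : ℝ} (hf : ∀ z ≥ y, HasDerivAt f (f' z) z) (hy : 0 ≤ f y)
    (hb : ∀ z ≥ y, f z = 0 → 0 < f' z) : ∀ x > y, 0 < f x := by
  have h0 : ∀ x ≥ y, 0 ≤ f x := by
    intro x hx
    have := image_le_of_deriv_right_lt_deriv_boundary (f := fun z => - f z) (f' := fun z => - f' z)
      (a := y) (b := x) (B := fun _ => 0) (B' := fun _ => 0)
      (fun z hz => ((hf z hz.1).neg).continuousAt.continuousWithinAt)
      (fun z hz => ((hf z hz.1).neg).hasDerivWithinAt) (by simpa using hy)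
      (fun z => hasDerivAt_const z _)
      (fun z hz e => by
        have := hb z hz.1 (by simpa using e)
        simpa using this) (right_mem_Icc.mpr hx)
    simpa using this
  intro x hx
  rcases (h0 x hx.le).lt_or_eq with h | h
  · exact h
  · exfalso
    have hmin : IsLocalMin f x := by
      filter_upwards [Ioi_mem_nhds hx] with z hz
      rw [← h]; exact h0 z (le_of_lt hz)
    have e := hmin.hasDerivAt_eq_zero (hf x hx.le)
    have := hb x hx.le h.symm
    linarith

/-- first crossing -/
lemma first_zero {f : ℝ → ℝ} (hc : ∀ z > 0, ContinuousAt f z)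
    (h0 : ∀ᶠ z in nhdsWithin 0 (Ioi 0), f z < 0) {x₁ : ℝ} (hx₁ : 0 < x₁) (h1 : 0 ≤ f x₁) :
    ∃ x₀, 0 < x₀ ∧ f x₀ = 0 ∧ ∀ z, 0 < z → z < x₀ → f z < 0 := by
  obtain ⟨ε, hε, hε'⟩ := mem_nhdsGT_iff_exists_Ioo_subset.mp h0
  have hε : 0 < ε := hε
  have hεx : ε ≤ x₁ := by
    by_contra hcon
    have : f x₁ < 0 := hε' ⟨hx₁, not_le.mp hcon⟩
    linarith
  have hcon : ContinuousOn f (Icc (ε / 2) x₁) := fun z hz =>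
    (hc z (by have := hz.1; linarith)).continuousWithinAt
  have hcomp : IsCompact (Icc (ε / 2) x₁ ∩ f ⁻¹' (Ici 0)) :=
    isCompact_Icc.of_isClosed_subset (hcon.preimage_isClosed_of_isClosed isClosed_Icc isClosed_Ici)
      inter_subset_left
  obtain ⟨x₀, hx₀, hleast⟩ := hcomp.exists_isLeast ⟨x₁, ⟨by linarith, le_rfl⟩, h1⟩
  have hpos : 0 < x₀ := by have := hx₀.1.1; linarith
  have hbefore : ∀ z, 0 < z → z < x₀ → f z < 0 := by
    intro z hz hzx
    by_cases hzε : z < ε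
    · exact hε' ⟨hz, hzε⟩
    · by_contra hn
      have := hleast ⟨⟨by linarith, by linarith [hx₀.1.2]⟩, not_lt.mp hn⟩
      linarith
  refine ⟨x₀, hpos, le_antisymm ?_ hx₀.2, hbefore⟩
  have ht : Tendsto f (nhdsWithin x₀ (Iio x₀)) (nhds (f x₀)) :=
    (hc x₀ hpos).tendsto.mono_left nhdsWithin_le_nhds
  refine le_of_tendsto ht ?_
  filter_upwards [Ioo_mem_nhdsLT hpos] with z hz
  exact (hbefore z hz.1 hz.2).le

lemma pos_of_deriv {f f' : ℝ → ℝ} {c b : ℝ} (hb : 0 < b)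
    (hf : ∀ z, 0 < z → z ≤ b → HasDerivAt f (f' z) z)
    (hlim : Tendsto f (nhdsWithin 0 (Ioi 0)) (nhds c))
    (hpos : ∀ z, 0 < z → z < b → 0 < f' z) : c < f b := by
  have hm : StrictMonoOn f (Ioc 0 b) := by
    apply strictMonoOn_of_deriv_pos (convex_Ioc 0 b)
    · exact fun z hz => (hf z hz.1 hz.2).continuousAt.continuousWithinAt
    · intro z hz
      rw [interior_Ioc] at hz
      rw [(hf z hz.1 hz.2.le).deriv]
      exact hpos z hz.1 hz.2
  have h1 : c ≤ f (b / 2) := by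
    refine le_of_tendsto hlim ?_
    filter_upwards [Ioo_mem_nhdsGT (half_pos hb)] with z hz
    exact (hm ⟨hz.1, by linarith [hz.2]⟩ ⟨by linarith, by linarith⟩ hz.2).le
  exact lt_of_le_of_lt h1 (hm ⟨by linarith, by linarith⟩ ⟨hb, le_rfl⟩ (by linarith))

noncomputable def DD (ν : ℝ) (v : ℝ → ℝ) (x : ℝ) : ℝ := x ^ 2 + ν ^ 2 - v x ^ 2
noncomputable def rr (ν : ℝ) (v : ℝ → ℝ) (x : ℝ) : ℝ := 1 + 2 * v x - 2 * x ^ 2 / DD ν v x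
noncomputable def RR (ν : ℝ) (v : ℝ → ℝ) (x : ℝ) : ℝ :=
  2 * DD ν v x - 2 * x ^ 2 / DD ν v x * (1 + rr ν v x)
noncomputable def FF (v : ℝ → ℝ) (l x : ℝ) : ℝ := (v x + 1 / 2 + l) ^ 2 - x ^ 2

namespace BData
variable {ν : ℝ} {v J : ℝ → ℝ}

lemma hv' (h : BData ν v J) {x : ℝ} (hx : 0 < x) : HasDerivAt v (DD ν v x / x) x := h.hv x hx

lemma hD (h : BData ν v J) {x : ℝ} (hx : 0 < x) :
    HasDerivAt (DD ν v) (2 * x - 2 * v x * DD ν v x / x) x := by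
  have := ((hasDerivAt_pow 2 x).add_const (ν ^ 2)).sub ((h.hv' hx).pow 2)
  refine HasDerivAt.congr_deriv (f := DD ν v) this ?_
  push_cast
  ring

lemma Dlim0 (h : BData ν v J) : Tendsto (DD ν v) (nhdsWithin 0 (Ioi 0)) (nhds 0) := by
  have h1 : Tendsto (fun x : ℝ => x ^ 2) (nhdsWithin 0 (Ioi 0)) (nhds 0) := by
    have : ContinuousAt (fun x : ℝ => x ^ 2) 0 := by fun_prop
    simpa using this.tendsto.mono_left (nhdsWithin_le_nhds (s := Ioi 0))
  have := (h1.add_const (ν ^ 2)).sub (h.vlim.pow 2)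
  rw [show (0 : ℝ) + ν ^ 2 - ν ^ 2 = 0 by ring] at this
  exact this

lemma Dpos (h : BData ν v J) {x : ℝ} (hx : 0 < x) : 0 < DD ν v x := by
  have := pos_of_deriv (f := fun z => DD ν v z * J z ^ 2) (f' := fun z => 2 * z * J z ^ 2)
    (c := 0) hx
    (fun z hz _ => by
      have := (h.hD hz).mul ((h.hJ z hz).pow 2)
      refine this.congr_deriv ?_
      simp only [Pi.pow_apply]
      push_cast
      field_simp
      ring)
    (by simpa using h.Dlim0.mul (h.Jlim.pow 2))
    (fun z hz _ => by have := h.Jpos z hz; positivity)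
  exact (pos_iff_pos_of_mul_pos this).mpr (pow_pos (h.Jpos x hx) 2)

lemma plim (h : BData ν v J) :
    Tendsto (fun x => 2 * x ^ 2 / DD ν v x) (nhdsWithin 0 (Ioi 0)) (nhds (2 * (ν + 1))) := by
  have hν := h.hν
  have h1 := (h.Dlim.inv₀ (by positivity)).const_mul 2
  have e : 2 * (1 / (ν + 1))⁻¹ = 2 * (ν + 1) := by simp
  rw [e] at h1
  refine h1.congr fun x => ?_
  unfold DD
  rw [inv_div]; ring

lemma rlim (h : BData ν v J) : Tendsto (rr ν v) (nhdsWithin 0 (Ioi 0)) (nhds (-1)) := by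
  have := ((h.vlim.const_mul 2).const_add 1).sub h.plim
  have e : 1 + 2 * ν - 2 * (ν + 1) = -1 := by ring
  rw [e] at this
  exact this

lemma Rlim (h : BData ν v J) : Tendsto (RR ν v) (nhdsWithin 0 (Ioi 0)) (nhds 0) := by
  have := (h.Dlim0.const_mul 2).sub (h.plim.mul (h.rlim.const_add 1))
  rw [show 2 * (0 : ℝ) - 2 * (ν + 1) * (1 + -1) = 0 by ring] at this
  exact this

lemma hp (h : BData ν v J) {x : ℝ} (hx : 0 < x) :
    HasDerivAt (fun x => 2 * x ^ 2 / DD ν v x) (2 * x ^ 2 / DD ν v x * (1 + rr ν v x) / x) x := by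
  have hd := h.Dpos hx
  have := ((hasDerivAt_pow 2 x).const_mul 2).div (h.hD hx) hd.ne'
  refine this.congr_deriv ?_
  unfold rr
  push_cast
  field_simp
  ring

lemma hr (h : BData ν v J) {x : ℝ} (hx : 0 < x) : HasDerivAt (rr ν v) (RR ν v x / x) x := by
  have := (((h.hv' hx).const_mul 2).const_add 1).sub (h.hp hx)
  refine HasDerivAt.congr_deriv (f := rr ν v) this ?_
  unfold RR
  ring

lemma hR (h : BData ν v J) {x : ℝ} (hx : 0 < x) : HasDerivAt (RR ν v)
    ((RR ν v x * (1 + rr ν v x - 2 * x ^ 2 / DD ν v x) - 4 * rr ν v x * DD ν v x) / x) x := by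
  have hd := h.Dpos hx
  have := ((h.hD hx).const_mul 2).sub ((h.hp hx).mul ((h.hr hx).const_add 1))
  refine HasDerivAt.congr_deriv (f := RR ν v) this ?_
  have hv : v x = (rr ν v x - 1 + 2 * x ^ 2 / DD ν v x) / 2 := by unfold rr; ring
  rw [hv]
  unfold RR
  generalize rr ν v x = r at *
  field_simp
  ring

lemma hS (h : BData ν v J) {x : ℝ} (hx : 0 < x) :
    HasDerivAt (fun x => RR ν v x * (DD ν v x / x) ^ 2 * J x ^ 2)
      (-4 * rr ν v x * DD ν v x ^ 3 * J x ^ 2 / x ^ 3) x := by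
  have hd := h.Dpos hx
  have := ((h.hR hx).mul (((h.hD hx).div (hasDerivAt_id x) hx.ne').pow 2)).mul ((h.hJ x hx).pow 2)
  refine this.congr_deriv ?_
  have hv : v x = (rr ν v x - 1 + 2 * x ^ 2 / DD ν v x) / 2 := by unfold rr; ring
  simp only [Pi.pow_apply, Pi.mul_apply, Pi.div_apply, id]
  rw [hv]
  generalize rr ν v x = r at *
  generalize RR ν v x = R at *
  push_cast
  field_simp
  ring

lemma Rpos_of (h : BData ν v J) {x : ℝ} (hx : 0 < x)
    (hneg : ∀ z, 0 < z → z < x → rr ν v z < 0) : 0 < RR ν v x := by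
  have hl : Tendsto (fun x => RR ν v x * (DD ν v x / x) ^ 2 * J x ^ 2)
      (nhdsWithin 0 (Ioi 0)) (nhds 0) := by
    have h1 : Tendsto (fun x : ℝ => x) (nhdsWithin 0 (Ioi 0)) (nhds 0) :=
      tendsto_id.mono_left nhdsWithin_le_nhds
    have h2 : Tendsto (fun x => DD ν v x / x) (nhdsWithin 0 (Ioi 0)) (nhds 0) := by
      have := h.Dlim.mul h1
      rw [mul_zero] at this
      refine this.congr' ?_
      filter_upwards [self_mem_nhdsWithin] with z hz
      have hz : 0 < z := hz
      unfold DD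
      field_simp
    simpa using (h.Rlim.mul (h2.pow 2)).mul (h.Jlim.pow 2)
  have := pos_of_deriv hx (fun z hz _ => h.hS hz) hl (fun z hz hzx => by
    have h1 := h.Dpos hz
    have h2 := h.Jpos z hz
    have h3 : 0 < - rr ν v z := by linarith [hneg z hz hzx]
    have : 0 < 4 * (- rr ν v z) * DD ν v z ^ 3 * J z ^ 2 / z ^ 3 := by positivity
    calc 0 < _ := this
      _ = _ := by ring)
  have h1 := h.Dpos hx
  have h2 := h.Jpos x hx
  rw [mul_assoc] at this
  exact (pos_iff_pos_of_mul_pos this).mpr (by positivity)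

lemma r_zero (h : BData ν v J) {x : ℝ} (hx : 0 < x) (h0 : rr ν v x = 0) :
    0 < 2 * v x - 1 ∧ RR ν v x * (2 * v x - 1) = 1 - 4 * ν ^ 2 := by
  have hd := h.Dpos hx
  have hvg := h.vgt x hx
  have hν := h.hν
  have e1 : DD ν v x * (1 + 2 * v x) = 2 * x ^ 2 := by
    unfold rr at h0
    have : 1 + 2 * v x = 2 * x ^ 2 / DD ν v x := by linarith
    rw [this]; field_simp
  have e2 : (2 * v x - 1) * x ^ 2 = (v x ^ 2 - ν ^ 2) * (1 + 2 * v x) := by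
    unfold DD at e1; nlinarith
  have hpos : 0 < 2 * v x - 1 := by
    have : 0 < (2 * v x - 1) * x ^ 2 := by
      rw [e2]
      apply mul_pos
      · nlinarith
      · linarith
    exact (pos_iff_pos_of_mul_pos this).mpr (by positivity)
  refine ⟨hpos, ?_⟩
  unfold RR
  rw [h0]
  have e3 : 2 * x ^ 2 / DD ν v x = 1 + 2 * v x := by
    rw [← e1]; field_simp
  rw [e3]
  unfold DD
  linear_combination 2 * e2

lemma r_neg (h : BData ν v J) (h2 : 1 / 2 ≤ ν) {x : ℝ} (hx : 0 < x) : rr ν v x < 0 := by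
  by_contra hcon
  obtain ⟨x₀, hx₀, e, hb⟩ := first_zero (fun z hz => (h.hr hz).continuousAt)
    (h.rlim.eventually (gt_mem_nhds (by norm_num : (-1 : ℝ) < 0))) hx (not_lt.mp hcon)
  have hR := h.Rpos_of hx₀ hb
  obtain ⟨a, b⟩ := h.r_zero hx₀ e
  have := mul_pos hR a
  nlinarith

lemma r_neg_before (h : BData ν v J) {z y : ℝ} (hy : 0 < y) (hyz : y < z) (hz : rr ν v z < 0) :
    rr ν v y < 0 := by
  by_cases h2 : 1 / 2 ≤ ν
  · exact h.r_neg h2 hy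
  · by_contra hcon
    have hν := h.hν
    have := barrier (f := rr ν v) (f' := fun x => RR ν v x / x) (y := y)
      (fun w hw => h.hr (lt_of_lt_of_le hy hw)) (not_lt.mp hcon)
      (fun w hw e => by
        have hw0 := lt_of_lt_of_le hy hw
        obtain ⟨a, b⟩ := h.r_zero hw0 e
        have hp : 0 < RR ν v w * (2 * v w - 1) := by rw [b]; nlinarith
        exact div_pos ((pos_iff_pos_of_mul_pos hp).mpr a) hw0) z hyz
    linarith

lemma R_pos (h : BData ν v J) {z : ℝ} (hz0 : 0 < z) (hz : rr ν v z < 0) : 0 < RR ν v z :=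
  h.Rpos_of hz0 fun _ hy hyz => h.r_neg_before hy hyz hz

lemma r_gt (h : BData ν v J) {z : ℝ} (hz0 : 0 < z) (hz : rr ν v z < 0) : -1 < rr ν v z :=
  pos_of_deriv hz0 (fun _ hw _ => h.hr hw) h.rlim (fun _ hw hwz =>
    div_pos (h.R_pos hw (h.r_neg_before hw hwz hz)) hw)

lemma v_lt (h : BData ν v J) {x : ℝ} (hx : 0 < x) : v x < x + ν := by
  have := h.Dpos hx
  have := h.vgt x hx
  have := h.hν
  unfold DD at *
  nlinarith [mul_pos hx h.hν]

lemma r_reach (h : BData ν v J) {l : ℝ} (hl : 0 < l) : ∃ x, 0 < x ∧ -2 * l ≤ rr ν v x := by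
  by_contra hcon
  push Not at hcon
  have hm : ∀ x > 0, HasDerivAt (fun x => DD ν v x / x) (DD ν v x / x * (- rr ν v x) / x) x := by
    intro x hx
    have hd := h.Dpos hx
    refine ((h.hD hx).div (hasDerivAt_id x) hx.ne').congr_deriv ?_
    simp only [id]
    unfold rr
    field_simp
    ring
  have hmpos : ∀ x > 0, 0 < DD ν v x / x := fun x hx => div_pos (h.Dpos hx) hx
  have hmono : MonotoneOn (fun x => DD ν v x / x) (Ici 1) := by
    apply monotoneOn_of_deriv_nonneg (convex_Ici 1)
    · exact fun z hz => (hm z (lt_of_lt_of_le one_pos hz)).continuousAt.continuousWithinAt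
    · intro z hz
      rw [interior_Ici] at hz
      exact (hm z (lt_trans one_pos hz)).differentiableAt.differentiableWithinAt
    · intro z hz
      rw [interior_Ici] at hz
      have hz0 : 0 < z := lt_trans one_pos hz
      rw [(hm z hz0).deriv]
      have := hcon z hz0
      have := hmpos z hz0
      have : 0 < - rr ν v z := by linarith
      positivity
  set m₁ := DD ν v 1 / 1 with hm₁
  have hm₁p : 0 < m₁ := hmpos 1 one_pos
  have hmono2 : MonotoneOn (fun x => DD ν v x / x - 2 * l * m₁ * Real.log x) (Ici 1) := by
    have hder : ∀ z > 0, HasDerivAt (fun x => DD ν v x / x - 2 * l * m₁ * Real.log x)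
        (DD ν v z / z * (- rr ν v z) / z - 2 * l * m₁ * z⁻¹) z := fun z hz =>
      (hm z hz).sub ((Real.hasDerivAt_log hz.ne').const_mul _)
    apply monotoneOn_of_deriv_nonneg (convex_Ici 1)
    · exact fun z hz => (hder z (lt_of_lt_of_le one_pos hz)).continuousAt.continuousWithinAt
    · intro z hz
      rw [interior_Ici] at hz
      exact (hder z (lt_trans one_pos hz)).differentiableAt.differentiableWithinAt
    · intro z hz
      rw [interior_Ici] at hz
      have hz0 : 0 < z := lt_trans one_pos hz
      rw [(hder z hz0).deriv]
      have h1 := hcon z hz0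
      have h2 : m₁ ≤ DD ν v z / z := hmono (mem_Ici.mpr le_rfl) (mem_Ici.mpr (le_of_lt hz)) (le_of_lt hz)
      have h3 : m₁ * (2 * l) ≤ DD ν v z / z * (- rr ν v z) :=
        mul_le_mul h2 (by linarith) (by positivity) (by linarith)
      have h4 : 0 ≤ (DD ν v z / z * (- rr ν v z) - m₁ * (2 * l)) / z := div_nonneg (by linarith) hz0.le
      calc 0 ≤ _ := h4
        _ = _ := by field_simp
  have hev : ∀ᶠ x in atTop, 2 ≤ 2 * l * m₁ * Real.log x :=
    (Real.tendsto_log_atTop.const_mul_atTop (by positivity)).eventually_ge_atTop 2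
  obtain ⟨X, hX⟩ := hev.exists_forall_of_atTop
  set Y := max X 1 with hY
  have hY1 : 1 ≤ Y := le_max_right _ _
  have hmono3 : MonotoneOn (fun x => v x - 2 * x) (Ici Y) := by
    have hder : ∀ z > 0, HasDerivAt (fun x => v x - 2 * x) (DD ν v z / z - 2) z := fun z hz => by
      refine ((h.hv' hz).sub ((hasDerivAt_id z).const_mul 2)).congr_deriv ?_
      ring
    apply monotoneOn_of_deriv_nonneg (convex_Ici Y)
    · exact fun z hz => (hder z (by linarith [mem_Ici.mp hz])).continuousAt.continuousWithinAt
    · intro z hz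
      rw [interior_Ici] at hz
      exact (hder z (by linarith [mem_Ioi.mp hz])).differentiableAt.differentiableWithinAt
    · intro z hz
      rw [interior_Ici] at hz
      have hz' := mem_Ioi.mp hz
      rw [(hder z (by linarith)).deriv]
      have h1 := hX z (le_trans (le_max_left _ _) hz'.le)
      have h2 := hmono2 (mem_Ici.mpr le_rfl) (mem_Ici.mpr (by linarith)) (by linarith : (1 : ℝ) ≤ z)
      simp only [Real.log_one, mul_zero, sub_zero] at h2
      have : 0 < DD ν v 1 / 1 := hm₁p
      linarith
  have hν := h.hν
  have hZ : Y ≤ 2 * Y + ν := by linarith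
  have h1 := hmono3 (mem_Ici.mpr le_rfl) (mem_Ici.mpr hZ) hZ
  have h2 := h.v_lt (x := 2 * Y + ν) (by linarith)
  have h3 := h.vgt Y (by linarith)
  simp only at h1
  linarith

lemma crossing (h : BData ν v J) {l : ℝ} (hl : 0 < l) (hl2 : l < 1 / 2) :
    ∃ x₀, 0 < x₀ ∧ rr ν v x₀ = -2 * l ∧ (∀ z, 0 < z → z < x₀ → rr ν v z < -2 * l) ∧
      (∀ z, x₀ < z → -2 * l < rr ν v z) := by
  obtain ⟨x₁, hx₁, h1⟩ := h.r_reach hl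
  obtain ⟨x₀, hx₀, e, hb⟩ := first_zero (f := fun z => rr ν v z - -2 * l)
    (fun z hz => ((h.hr hz).sub_const _).continuousAt)
    ((h.rlim.eventually (gt_mem_nhds (by linarith : (-1 : ℝ) < -2 * l))).mono
      fun z hz => by linarith) hx₁ (by linarith)
  have e' : rr ν v x₀ = -2 * l := by linarith
  refine ⟨x₀, hx₀, e', fun z hz hzx => by linarith [hb z hz hzx], fun z hz => ?_⟩
  have := barrier (f := fun z => rr ν v z - -2 * l) (f' := fun x => RR ν v x / x) (y := x₀)
      (fun w hw => (h.hr (lt_of_lt_of_le hx₀ hw)).sub_const _) (by linarith)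
      (fun w hw e => by
        have hw0 := lt_of_lt_of_le hx₀ hw
        exact div_pos (h.R_pos hw0 (by linarith)) hw0) z hz
  linarith

lemma hF (h : BData ν v J) (l : ℝ) {x : ℝ} (hx : 0 < x) :
    HasDerivAt (FF v l) (DD ν v x * (rr ν v x + 2 * l) / x) x := by
  have hd := h.Dpos hx
  have := ((((h.hv' hx).add_const (1 / 2)).add_const l).pow 2).sub (hasDerivAt_pow 2 x)
  refine HasDerivAt.congr_deriv (f := FF v l) this ?_
  unfold rr
  push_cast
  field_simp
  ring

lemma F_min (h : BData ν v J) {l x₀ : ℝ} (hx₀ : 0 < x₀)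
    (hb : ∀ z, 0 < z → z < x₀ → rr ν v z < -2 * l) (ha : ∀ z, x₀ < z → -2 * l < rr ν v z)
    {x : ℝ} (hx : 0 < x) (hne : x ≠ x₀) : FF v l x₀ < FF v l x := by
  rcases lt_or_gt_of_ne hne with hlt | hgt
  · have : StrictAntiOn (FF v l) (Icc x x₀) := by
      apply strictAntiOn_of_deriv_neg (convex_Icc x x₀)
      · exact fun z hz => (h.hF l (by linarith [hz.1])).continuousAt.continuousWithinAt
      · intro z hz
        rw [interior_Icc] at hz
        have hz0 : 0 < z := by linarith [hz.1]
        rw [(h.hF l hz0).deriv]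
        apply div_neg_of_neg_of_pos _ hz0
        exact mul_neg_of_pos_of_neg (h.Dpos hz0) (by linarith [hb z hz0 hz.2])
    exact this (left_mem_Icc.mpr hlt.le) (right_mem_Icc.mpr hlt.le) hlt
  · have : StrictMonoOn (FF v l) (Icc x₀ x) := by
      apply strictMonoOn_of_deriv_pos (convex_Icc x₀ x)
      · exact fun z hz => (h.hF l (by linarith [hz.1])).continuousAt.continuousWithinAt
      · intro z hz
        rw [interior_Icc] at hz
        have hz0 : 0 < z := by linarith [hz.1]
        rw [(h.hF l hz0).deriv]
        apply div_pos _ hz0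
        exact mul_pos (h.Dpos hz0) (by linarith [ha z hz.1])
    exact this (left_mem_Icc.mpr hgt.le) (right_mem_Icc.mpr hgt.le) hgt

lemma F_pos (h : BData ν v J) {l x : ℝ} (hl : 0 < l) (hln : 1 / 2 - l ≤ ν) (hx : 0 < x) :
    0 < FF v l x := by
  have hν := h.hν
  have key : 0 < v x + 1 / 2 + l - x := by
    by_cases hc : x ≤ ν + 1 / 2 + l
    · linarith [h.vgt x hx]
    · have hy0 : 0 < ν + 1 / 2 + l := by linarith
      have hfy : 0 < v (ν + 1 / 2 + l) + 1 / 2 + l - (ν + 1 / 2 + l) := by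
        linarith [h.vgt _ hy0]
      refine barrier (f := fun x => v x + 1 / 2 + l - x) (f' := fun x => DD ν v x / x - 1)
        (y := ν + 1 / 2 + l)
        (fun w hw => by
          have hw0 : 0 < w := by linarith
          exact (((h.hv' hw0).add_const (1 / 2)).add_const l).sub (hasDerivAt_id w))
        hfy.le (fun w hw e => ?_) x (not_le.mp hc)
      have hw0 : 0 < w := by linarith
      have hw1 : ν + 1 / 2 + l < w := by
        rcases hw.lt_or_eq with h1 | h1
        · exact h1
        · rw [← h1] at e; linarith
      have ev : v w = w - 1 / 2 - l := by linarith
      rw [sub_pos, lt_div_iff₀ hw0]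
      unfold DD
      rw [ev]
      nlinarith [mul_pos hl (sub_pos.mpr hw1), mul_nonneg hy0.le (by linarith : 0 ≤ ν - 1 / 2 + l)]
  have := h.vgt x hx
  unfold FF
  nlinarith

lemma F0_gt (h : BData ν v J) (h2 : 1 / 2 ≤ ν) {x : ℝ} (hx : 0 < x) :
    ν ^ 2 - 1 / 4 < FF v 0 x := by
  by_contra hcon
  have hl : Tendsto (fun z => ν ^ 2 - 1 / 4 - FF v 0 z) (nhdsWithin 0 (Ioi 0))
      (nhds (ν ^ 2 - 1 / 4 - ((ν + 1 / 2 + 0) ^ 2 - 0))) := by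
    have h1 : Tendsto (fun x : ℝ => x ^ 2) (nhdsWithin 0 (Ioi 0)) (nhds 0) := by
      have : ContinuousAt (fun x : ℝ => x ^ 2) 0 := by fun_prop
      simpa using this.tendsto.mono_left (nhdsWithin_le_nhds (s := Ioi 0))
    exact ((((h.vlim.add_const _).add_const _).pow 2).sub h1).const_sub _
  obtain ⟨x₀, hx₀, e, -⟩ := first_zero (fun z hz => ((h.hF 0 hz).const_sub _).continuousAt)
    (hl.eventually (gt_mem_nhds (by nlinarith))) hx (by linarith)
  have hr := h.r_neg h2 hx₀
  have hd := h.Dpos hx₀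
  have hv := h.vgt x₀ hx₀
  have e1 : DD ν v x₀ * rr ν v x₀ = (1 + 2 * v x₀) * DD ν v x₀ - 2 * x₀ ^ 2 := by
    unfold rr; field_simp
  have e2 : DD ν v x₀ = v x₀ + 1 / 2 := by
    unfold FF at e; unfold DD; linarith
  have e3 := mul_neg_of_pos_of_neg hd hr
  rw [e1, e2] at e3
  unfold FF at e
  nlinarith

lemma F0_small (h : BData ν v J) (h2 : 1 / 2 ≤ ν) {ε : ℝ} (hε : 0 < ε) :
    ∃ x, 0 < x ∧ FF v 0 x < ν ^ 2 - 1 / 4 + ε := by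
  by_contra hcon
  push Not at hcon
  have hν := h.hν
  have hanti : AntitoneOn (fun x => (v x + 1 / 2 - ε) / x) (Ioi 0) := by
    have hder : ∀ z > 0, HasDerivAt (fun x => (v x + 1 / 2 - ε) / x)
        ((ν ^ 2 - 1 / 4 + ε - FF v 0 z) / z ^ 2) z := fun z hz => by
      refine ((((h.hv' hz).add_const (1 / 2)).sub_const ε).div (hasDerivAt_id z) hz.ne').congr_deriv ?_
      unfold FF DD
      simp only [id]
      field_simp
      ring
    apply antitoneOn_of_deriv_nonpos (convex_Ioi 0)
    · exact fun z hz => (hder z hz).continuousAt.continuousWithinAt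
    · intro z hz
      rw [interior_Ioi] at hz
      exact (hder z hz).differentiableAt.differentiableWithinAt
    · intro z hz
      rw [interior_Ioi] at hz
      have hz0 : 0 < z := hz
      rw [(hder z hz).deriv]
      apply div_nonpos_of_nonpos_of_nonneg _ (by positivity)
      linarith [hcon z hz]
  have hge : ∀ z > 0, z ≤ v z + 1 / 2 := fun z hz => by
    have h1 := h.F0_gt h2 hz
    have h3 := h.vgt z hz
    unfold FF at h1
    by_contra hc
    nlinarith
  have hge2 : ∀ z > 0, z ≤ v z + 1 / 2 - ε := by
    intro z hz
    by_contra hc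
    push Not at hc
    set q := (v z + 1 / 2 - ε) / z with hq
    have hq1 : q < 1 := by rw [hq, div_lt_one hz]; exact hc
    set w := max z (ε / (1 - q) + 1) with hw
    have hwz : z ≤ w := le_max_left _ _
    have hw2 : ε / (1 - q) + 1 ≤ w := le_max_right _ _
    have hw0 : 0 < w := by linarith
    have h3 : (v w + 1 / 2 - ε) / w ≤ q := hanti (mem_Ioi.mpr hz) (mem_Ioi.mpr hw0) hwz
    rw [div_le_iff₀ hw0] at h3
    have h4 := hge w hw0
    have h5 : ε / (1 - q) < w := by linarith
    rw [div_lt_iff₀ (by linarith)] at h5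
    nlinarith
  have hF : AntitoneOn (FF v 0) (Ici 1) := by
    apply antitoneOn_of_deriv_nonpos (convex_Ici 1)
    · exact fun z hz => (h.hF 0 (lt_of_lt_of_le one_pos hz)).continuousAt.continuousWithinAt
    · intro z hz
      rw [interior_Ici] at hz
      exact (h.hF 0 (lt_trans one_pos hz)).differentiableAt.differentiableWithinAt
    · intro z hz
      rw [interior_Ici] at hz
      have hz0 : 0 < z := lt_trans one_pos hz
      rw [(h.hF 0 hz0).deriv]
      apply div_nonpos_of_nonpos_of_nonneg _ hz0.le
      exact mul_nonpos_of_nonneg_of_nonpos (h.Dpos hz0).le (by linarith [h.r_neg h2 hz0])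
  set w := max 1 (FF v 0 1 / (2 * ε)) with hw
  have hw1 : 1 ≤ w := le_max_left _ _
  have hw2 : FF v 0 1 / (2 * ε) ≤ w := le_max_right _ _
  rw [div_le_iff₀ (by positivity)] at hw2
  have h3 := hF (mem_Ici.mpr le_rfl) (mem_Ici.mpr hw1) hw1
  have h4 := hge2 w (by linarith)
  have h5 : (w + ε) ^ 2 ≤ (v w + 1 / 2 + 0) ^ 2 := by
    apply pow_le_pow_left₀ (by linarith); linarith
  have h6 : FF v 0 w = (v w + 1 / 2 + 0) ^ 2 - w ^ 2 := rfl
  nlinarith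

end BData

lemma low_le_iff {ν l B x : ℝ} (hν : 0 < ν) (hl : 0 < l) (hx : 0 < x) :
    lowI ν l B x ≤ ratioI ν x ↔ B ≤ FF (vv ν) l x := by
  have hv := (bdata hν).vgt x hx
  rw [ratioI_eq hν hx]
  unfold lowI FF
  rw [div_le_div_iff_of_pos_right hx,
    show (ν - 1 / 2 - l + Real.sqrt (B + x ^ 2) ≤ vv ν x + ν) ↔
      (Real.sqrt (B + x ^ 2) ≤ vv ν x + 1 / 2 + l) by constructor <;> intro h <;> linarith,
    Real.sqrt_le_left (by linarith)]
  constructor <;> intro h <;> linarith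

lemma low_eq_iff {ν l B x : ℝ} (hν : 0 < ν) (hl : 0 < l) (hB : 0 < B) (hx : 0 < x) :
    ratioI ν x = lowI ν l B x ↔ B = FF (vv ν) l x := by
  have hv := (bdata hν).vgt x hx
  rw [ratioI_eq hν hx]
  unfold lowI FF
  rw [div_left_inj' hx.ne',
    show (vv ν x + ν = ν - 1 / 2 - l + Real.sqrt (B + x ^ 2)) ↔
      (Real.sqrt (B + x ^ 2) = vv ν x + 1 / 2 + l) by constructor <;> intro h <;> linarith,
    Real.sqrt_eq_iff_eq_sq (by positivity) (by linarith)]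
  constructor <;> intro h <;> linarith

lemma tangent_deriv {ν l B x : ℝ} (hν : 0 < ν) (hB : 0 < B) (hx : 0 < x)
    (hle : ∀ x > 0, lowI ν l B x ≤ ratioI ν x) (he : ratioI ν x = lowI ν l B x) :
    deriv (ratioI ν) x = deriv (lowI ν l B) x := by
  have h1 : DifferentiableAt ℝ (ratioI ν) x := by
    have : DifferentiableAt ℝ (fun z => (vv ν z + ν) / z) x :=
      ((((bdata hν).hv x hx).add_const ν).div (hasDerivAt_id x) hx.ne').differentiableAt
    refine this.congr_of_eventuallyEq ?_
    filter_upwards [Ioi_mem_nhds hx] with z hz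
    exact ratioI_eq hν hz
  have h2 : DifferentiableAt ℝ (lowI ν l B) x := by
    have hs : DifferentiableAt ℝ (fun z : ℝ => Real.sqrt (B + z ^ 2)) x :=
      DifferentiableAt.sqrt (by fun_prop) (by positivity)
    exact (hs.const_add _).div differentiableAt_id hx.ne'
  have hmin : IsLocalMin (fun z => ratioI ν z - lowI ν l B z) x := by
    filter_upwards [Ioi_mem_nhds hx] with z hz
    have := hle z hz
    linarith
  have e := hmin.hasDerivAt_eq_zero (h1.hasDerivAt.sub h2.hasDerivAt)
  linarith

lemma core_s16 {ν l : ℝ} (hν : 0 < ν) (hl : 0 < l) (hl2 : l < 1 / 2) (hln : 1 / 2 - l ≤ ν) :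
    ∃ x₀, 0 < x₀ ∧ (∀ z, 0 < z → z < x₀ → rr ν (vv ν) z < -2 * l) ∧
      (∀ z, x₀ < z → -2 * l < rr ν (vv ν) z) ∧ rr ν (vv ν) x₀ = -2 * l ∧
      (∀ z, 0 < z → FF (vv ν) l x₀ ≤ FF (vv ν) l z) ∧
      TouchesBelowI ν l (FF (vv ν) l x₀) ∧ TangentBelowI ν l (FF (vv ν) l x₀) x₀ := by
  have hb := bdata hν
  obtain ⟨x₀, hx₀, e, h1, h2⟩ := hb.crossing hl hl2
  have hB := hb.F_pos hl hln hx₀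
  have hmin : ∀ z, 0 < z → FF (vv ν) l x₀ ≤ FF (vv ν) l z := by
    intro z hz
    by_cases hne : z = x₀
    · rw [hne]
    · exact (hb.F_min hx₀ h1 h2 hz hne).le
  have hle : ∀ x > 0, lowI ν l (FF (vv ν) l x₀) x ≤ ratioI ν x := fun x hx =>
    (low_le_iff hν hl hx).mpr (hmin x hx)
  have heq : ratioI ν x₀ = lowI ν l (FF (vv ν) l x₀) x₀ := (low_eq_iff hν hl hB hx₀).mpr rfl
  refine ⟨x₀, hx₀, h1, h2, e, hmin, ⟨hB, hle, x₀, hx₀, heq⟩, hx₀, heq, ?_,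
    tangent_deriv hν hB hx₀ hle heq⟩
  intro x hx hxe
  by_contra hne
  have := hb.F_min hx₀ h1 h2 hx hne
  rw [low_eq_iff hν hl hB hx] at hxe
  linarith

theorem best_lower_bound_I (ν : ℝ) :
    (∀ lam ∈ Ioo (0 : ℝ) (1 / 2), 1 / 2 - lam ≤ ν →
      (∃! B : ℝ, TouchesBelowI ν lam B) ∧
      (∀ B : ℝ, TouchesBelowI ν lam B → ∃ xs : ℝ, TangentBelowI ν lam B xs)) ∧
    (1 / 2 ≤ ν →
      ∃ B X : ℝ → ℝ,
        (∀ lam ∈ Ioo (0 : ℝ) (1 / 2),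
          TouchesBelowI ν lam (B lam) ∧ TangentBelowI ν lam (B lam) (X lam)) ∧
        StrictMonoOn B (Ioo (0 : ℝ) (1 / 2)) ∧
        StrictAntiOn X (Ioo (0 : ℝ) (1 / 2)) ∧
        Tendsto B (nhdsWithin 0 (Ioi 0)) (nhds (ν ^ 2 - 1 / 4)) ∧
        Tendsto B (nhdsWithin (1 / 2) (Iio (1 / 2))) (nhds ((ν + 1) ^ 2)) ∧
        Tendsto X (nhdsWithin 0 (Ioi 0)) atTop ∧
        Tendsto X (nhdsWithin (1 / 2) (Iio (1 / 2))) (nhds 0)) := by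
  constructor
  · intro l hl hln
    have hν : 0 < ν := by linarith [hl.2]
    obtain ⟨x₀, hx₀, h1, h2, e, hmin, ht, htan⟩ := core_s16 hν hl.1 hl.2 hln
    have huniq : ∀ B, TouchesBelowI ν l B → B = FF (vv ν) l x₀ := by
      rintro B ⟨hB, hle, x, hx, he⟩
      rw [low_eq_iff hν hl.1 hB hx] at he
      have a := (low_le_iff hν hl.1 hx₀).mp (hle x₀ hx₀)
      have b := hmin x hx
      linarith
    refine ⟨⟨_, ht, huniq⟩, fun B hB => ⟨x₀, ?_⟩⟩
    rw [huniq B hB]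
    exact htan
  · intro h2
    have hν : 0 < ν := by linarith
    have hb := bdata hν
    have hc : ∀ l : ℝ, ∃ x₀, l ∈ Ioo (0 : ℝ) (1 / 2) → (0 < x₀ ∧
      (∀ z, 0 < z → z < x₀ → rr ν (vv ν) z < -2 * l) ∧
      (∀ z, x₀ < z → -2 * l < rr ν (vv ν) z) ∧ rr ν (vv ν) x₀ = -2 * l ∧
      (∀ z, 0 < z → FF (vv ν) l x₀ ≤ FF (vv ν) l z) ∧
      TouchesBelowI ν l (FF (vv ν) l x₀) ∧ TangentBelowI ν l (FF (vv ν) l x₀) x₀) := by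
      intro l
      by_cases hl : l ∈ Ioo (0 : ℝ) (1 / 2)
      · obtain ⟨x₀, h⟩ := core_s16 hν hl.1 hl.2 (by linarith [hl.1])
        exact ⟨x₀, fun _ => h⟩
      · exact ⟨0, fun h => absurd h hl⟩
    choose X hX using hc
    have hev0 : ∀ᶠ l in nhdsWithin (0 : ℝ) (Ioi 0), l ∈ Ioo (0 : ℝ) (1 / 2) :=
      Ioo_mem_nhdsGT (by norm_num)
    have hev1 : ∀ᶠ l in nhdsWithin (1 / 2 : ℝ) (Iio (1 / 2)), l ∈ Ioo (0 : ℝ) (1 / 2) :=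
      Ioo_mem_nhdsLT (by norm_num)
    have hXlim : Tendsto X (nhdsWithin (1 / 2) (Iio (1 / 2))) (nhds 0) := by
      rw [tendsto_order]
      constructor
      · intro a ha
        filter_upwards [hev1] with l hl
        exact lt_trans ha (hX l hl).1
      · intro a ha
        have hr := hb.r_gt (half_pos ha) (hb.r_neg h2 (half_pos ha))
        have hlt : - rr ν (vv ν) (a / 2) / 2 < 1 / 2 := by linarith
        filter_upwards [hev1, Ioo_mem_nhdsLT hlt] with l hl hl'
        obtain ⟨h0, h1, -⟩ := hX l hl
        by_contra hcon
        have := h1 (a / 2) (half_pos ha) (by linarith)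
        linarith [hl'.1]
    refine ⟨fun l => FF (vv ν) l (X l), X, ?_, ?_, ?_, ?_, ?_, ?_, hXlim⟩
    · intro l hl
      exact (hX l hl).2.2.2.2.2
    · intro l hl m hm hlm
      obtain ⟨-, -, -, -, hmin, -⟩ := hX l hl
      have h0 := (hX m hm).1
      refine lt_of_le_of_lt (hmin _ h0) ?_
      have := hb.vgt _ h0
      have := hl.1
      unfold FF
      have : (vv ν (X m) + 1 / 2 + l) ^ 2 < (vv ν (X m) + 1 / 2 + m) ^ 2 :=
        pow_lt_pow_left₀ (by linarith) (by linarith) (by norm_num)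
      linarith
    · intro l hl m hm hlm
      obtain ⟨h0, h1, h3, e, -⟩ := hX m hm
      obtain ⟨h0', -, -, e', -⟩ := hX l hl
      by_contra hcon
      rcases (not_lt.mp hcon).lt_or_eq with h | h
      · have := h1 _ h0' h
        linarith
      · rw [h] at e'
        linarith
    · rw [tendsto_order]
      constructor
      · intro a ha
        filter_upwards [hev0] with l hl
        have h0 := (hX l hl).1
        have h3 := hb.F0_gt h2 h0
        have := hb.vgt _ h0
        have hl1 := hl.1
        have : (vv ν (X l) + 1 / 2 + 0) ^ 2 ≤ (vv ν (X l) + 1 / 2 + l) ^ 2 :=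
          pow_le_pow_left₀ (by linarith) (by linarith) 2
        unfold FF at *
        linarith
      · intro a ha
        obtain ⟨x, hx, hxF⟩ := hb.F0_small h2 (sub_pos.mpr ha)
        have hcont : ContinuousAt (fun l => FF (vv ν) l x) 0 := by
          unfold FF; fun_prop
        have : ∀ᶠ l in nhdsWithin (0 : ℝ) (Ioi 0), FF (vv ν) l x < a :=
          (hcont.tendsto.mono_left nhdsWithin_le_nhds).eventually (gt_mem_nhds (by linarith))
        filter_upwards [hev0, this] with l hl hla
        exact lt_of_le_of_lt ((hX l hl).2.2.2.2.1 x hx) hla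
    · have hid : Tendsto (fun l : ℝ => l) (nhdsWithin (1 / 2) (Iio (1 / 2))) (nhds (1 / 2)) :=
        tendsto_id.mono_left nhdsWithin_le_nhds
      have hup : Tendsto (fun l : ℝ => (ν + 1 / 2 + l) ^ 2) (nhdsWithin (1 / 2) (Iio (1 / 2)))
          (nhds ((ν + 1) ^ 2)) := by
        have := (hid.const_add (ν + 1 / 2)).pow 2
        rwa [show ν + 1 / 2 + 1 / 2 = ν + 1 by ring] at this
      have hlo : Tendsto (fun l : ℝ => (ν + 1 / 2 + l) ^ 2 - X l ^ 2)
          (nhdsWithin (1 / 2) (Iio (1 / 2))) (nhds ((ν + 1) ^ 2)) := by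
        have := hup.sub (hXlim.pow 2)
        simpa using this
      refine tendsto_of_tendsto_of_tendsto_of_le_of_le' hlo hup ?_ ?_
      · filter_upwards [hev1] with l hl
        have h3 := hb.vgt _ (hX l hl).1
        have hl1 := hl.1
        have : (ν + 1 / 2 + l) ^ 2 ≤ (vv ν (X l) + 1 / 2 + l) ^ 2 :=
          pow_le_pow_left₀ (by linarith) (by linarith) 2
        unfold FF
        linarith
      · filter_upwards [hev1] with l hl
        have hmin := (hX l hl).2.2.2.2.1
        have ht : Tendsto (fun z => FF (vv ν) l z) (nhdsWithin 0 (Ioi 0))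
            (nhds ((ν + 1 / 2 + l) ^ 2 - 0)) := by
          have h1 : Tendsto (fun x : ℝ => x ^ 2) (nhdsWithin 0 (Ioi 0)) (nhds 0) := by
            have : ContinuousAt (fun x : ℝ => x ^ 2) 0 := by fun_prop
            simpa using this.tendsto.mono_left (nhdsWithin_le_nhds (s := Ioi 0))
          exact (((hb.vlim.add_const _).add_const _).pow 2).sub h1
        rw [sub_zero] at ht
        refine ge_of_tendsto ht ?_
        filter_upwards [self_mem_nhdsWithin] with z hz
        exact hmin z hz
    · rw [tendsto_atTop]
      intro M
      have hM : 0 < max M 1 := lt_of_lt_of_le one_pos (le_max_right _ _)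
      have hr := hb.r_neg h2 hM
      have hlt : 0 < - rr ν (vv ν) (max M 1) / 2 := by linarith
      filter_upwards [hev0, Ioo_mem_nhdsGT hlt] with l hl hl'
      obtain ⟨h0, h1, h3, e, -⟩ := hX l hl
      refine le_trans (le_max_left M 1) ?_
      by_contra hcon
      have := h3 _ (not_le.mp hcon)
      linarith [hl'.2]
end
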